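/- There exists an absolute constant C > 1 such that for every prime p and every finite symmetric generating set A of G = SL₂(F_p) with N := |A| > C, every element of G can be written as a product of at most C·(log|G| / log(N/C))^d elements of A, where d = log 8 / log(3/2). -/

import Mathlib

open Pointwise

instance (p : ℕ) : DecidableEq (Matrix.SpecialLinearGroup (Fin 2) (ZMod p)) := by
  unfold Matrix.SpecialLinearGroup
  infer_instance


abbrev SLp (p : ℕ) := Matrix.SpecialLinearGroup (Fin 2) (ZMod p)

namespace SLp

set_option linter.unusedSectionVars false

variable {p : ℕ} [hp : Fact p.Prime]

/-- trace -/
def tr (g : SLp p) : ZMod p := g.1 0 0 + g.1 1 1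

/-- regular semisimple with non-zero trace -/
def Good (g : SLp p) : Prop := tr g ≠ 0 ∧ tr g ^ 2 ≠ 4

/-- `x` is in the span of `1` and `w` -/
def InSpan (w x : SLp p) : Prop := ∃ α β : ZMod p, x.1 0 0 = α + β * w.1 0 0 ∧
  x.1 0 1 = β * w.1 0 1 ∧ x.1 1 0 = β * w.1 1 0 ∧ x.1 1 1 = α + β * w.1 1 1

theorem ext4 {x y : SLp p} (h1 : x.1 0 0 = y.1 0 0) (h2 : x.1 0 1 = y.1 0 1)
    (h3 : x.1 1 0 = y.1 1 0) (h4 : x.1 1 1 = y.1 1 1) : x = y := by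
  ext i j
  fin_cases i <;> fin_cases j <;> assumption

theorem det4 (x : SLp p) : x.1 0 0 * x.1 1 1 - x.1 0 1 * x.1 1 0 = 1 := by
  have := x.2
  rwa [Matrix.det_fin_two] at this

theorem mul4 (x y : SLp p) :
    (x * y).1 0 0 = x.1 0 0 * y.1 0 0 + x.1 0 1 * y.1 1 0 ∧
    (x * y).1 0 1 = x.1 0 0 * y.1 0 1 + x.1 0 1 * y.1 1 1 ∧
    (x * y).1 1 0 = x.1 1 0 * y.1 0 0 + x.1 1 1 * y.1 1 0 ∧
    (x * y).1 1 1 = x.1 1 0 * y.1 0 1 + x.1 1 1 * y.1 1 1 := by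
  refine ⟨?_, ?_, ?_, ?_⟩ <;>
  · show (x.1 * y.1) _ _ = _
    rw [Matrix.mul_apply, Fin.sum_univ_two]

theorem inv4 (x : SLp p) :
    (x⁻¹).1 0 0 = x.1 1 1 ∧ (x⁻¹).1 0 1 = - x.1 0 1 ∧
    (x⁻¹).1 1 0 = - x.1 1 0 ∧ (x⁻¹).1 1 1 = x.1 0 0 := by
  have : (x⁻¹).1 = x.1.adjugate := rfl
  rw [this, Matrix.adjugate_fin_two]
  simp

theorem one4 : (1 : SLp p).1 0 0 = 1 ∧ (1 : SLp p).1 0 1 = 0 ∧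
    (1 : SLp p).1 1 0 = 0 ∧ (1 : SLp p).1 1 1 = 1 := by
  refine ⟨?_, ?_, ?_, ?_⟩ <;> simp

theorem tr_conj (g x : SLp p) : tr (g * x * g⁻¹) = tr x := by
  unfold tr
  obtain ⟨h1, h2, h3, h4⟩ := mul4 (g * x) g⁻¹
  obtain ⟨k1, k2, k3, k4⟩ := mul4 g x
  obtain ⟨i1, i2, i3, i4⟩ := inv4 g
  rw [h1, h4, k1, k2, k3, k4, i1, i2, i3, i4]
  linear_combination (x.1 0 0 + x.1 1 1) * det4 g

theorem good_conj (g x : SLp p) : Good (g * x * g⁻¹) ↔ Good x := by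
  unfold Good; rw [tr_conj]

theorem two_ne (h5 : 5 ≤ p) : (2 : ZMod p) ≠ 0 := by
  have : ((2 : ℕ) : ZMod p) ≠ 0 := by
    rw [Ne, ZMod.natCast_eq_zero_iff]
    intro h
    have := Nat.le_of_dvd (by norm_num) h
    omega
  simpa using this

theorem three_ne (h5 : 5 ≤ p) : (3 : ZMod p) ≠ 0 := by
  have : ((3 : ℕ) : ZMod p) ≠ 0 := by
    rw [Ne, ZMod.natCast_eq_zero_iff]
    intro h
    have := Nat.le_of_dvd (by norm_num) h
    omega
  simpa using this

theorem two_sol (h5 : 5 ≤ p) {w : SLp p} {κ : ZMod p} (hκ : ¬ (tr w ^ 2 = 4 ∧ κ ^ 2 = 4))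
    (S : Finset (SLp p)) (hS : ∀ x ∈ S, InSpan w x ∧ tr x = κ) : S.card ≤ 2 := by
  have h2 := two_ne h5
  by_contra hc
  push Not at hc
  obtain ⟨x, y, z, hx, hy, hz, hxy, hxz, hyz⟩ := Finset.two_lt_card_iff.1 hc
  have key : ∀ x ∈ S, ∃ β : ZMod p, β ^ 2 * (4 - tr w ^ 2) = 4 - κ ^ 2 ∧
      2 * x.1 0 0 = κ - β * tr w + 2 * β * w.1 0 0 ∧ x.1 0 1 = β * w.1 0 1 ∧ x.1 1 0 = β * w.1 1 0 ∧
      2 * x.1 1 1 = κ - β * tr w + 2 * β * w.1 1 1 := by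
    intro x hx
    obtain ⟨⟨α, β, e1, e2, e3, e4⟩, ht⟩ := hS x hx
    have hw := det4 w
    have hx' := det4 x
    unfold tr at ht ⊢
    refine ⟨β, ?_, ?_, e2, e3, ?_⟩
    · rw [← ht]
      rw [e1, e2, e3, e4] at *
      linear_combination 4 * hx' - 4 * β ^ 2 * hw
    · rw [← ht]; rw [e1, e4]; ring
    · rw [← ht]; rw [e1, e4]; ring
  obtain ⟨b1, q1, x1, x2, x3, x4⟩ := key x hx
  obtain ⟨b2, q2, y1, y2, y3, y4⟩ := key y hy
  obtain ⟨b3, q3, z1, z2, z3, z4⟩ := key z hz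
  by_cases ht : 4 - tr w ^ 2 = 0
  · apply hκ
    rw [ht] at q1
    constructor
    · linear_combination -ht
    · linear_combination q1
  · have e : ∀ b b' : ZMod p, b ^ 2 * (4 - tr w ^ 2) = 4 - κ ^ 2 →
      b' ^ 2 * (4 - tr w ^ 2) = 4 - κ ^ 2 → b = b' ∨ b = - b' := by
      intro b b' h h'
      apply sq_eq_sq_iff_eq_or_eq_neg.1
      exact mul_right_cancel₀ ht (h.trans h'.symm)
    have nxy : b1 ≠ b2 := by
      rintro rfl
      apply hxy
      apply ext4 (mul_left_cancel₀ h2 (x1.trans y1.symm)) (x2.trans y2.symm) (x3.trans y3.symm)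
        (mul_left_cancel₀ h2 (x4.trans y4.symm))
    have nxz : b1 ≠ b3 := by
      rintro rfl
      apply hxz
      apply ext4 (mul_left_cancel₀ h2 (x1.trans z1.symm)) (x2.trans z2.symm) (x3.trans z3.symm)
        (mul_left_cancel₀ h2 (x4.trans z4.symm))
    have nyz : b2 ≠ b3 := by
      rintro rfl
      apply hyz
      apply ext4 (mul_left_cancel₀ h2 (y1.trans z1.symm)) (y2.trans z2.symm) (y3.trans z3.symm)
        (mul_left_cancel₀ h2 (y4.trans z4.symm))
    have h1 := (e b1 b2 q1 q2).resolve_left nxy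
    have h3 := (e b1 b3 q1 q3).resolve_left nxz
    apply nyz
    linear_combination h1 - h3

theorem inSpan_of_commute {w x : SLp p} (hw : tr w ^ 2 ≠ 4) (h : x * w = w * x) : InSpan w x := by
  have hd := det4 w
  obtain ⟨a1, a2, a3, a4⟩ := mul4 x w
  obtain ⟨b1, b2, b3, b4⟩ := mul4 w x
  rw [h] at a1 a2 a3 a4
  have c1 := a1.symm.trans b1
  have c2 := a2.symm.trans b2
  have c3 := a3.symm.trans b3
  by_cases hb : w.1 0 1 = 0
  · by_cases hc : w.1 1 0 = 0
    · have had : w.1 0 0 - w.1 1 1 ≠ 0 := by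
        intro h
        apply hw
        unfold tr
        rw [hb, hc] at hd
        linear_combination (w.1 0 0 - w.1 1 1) * h + 4 * hd
      rw [hb] at c1 c2
      rw [hc] at c1 c3
      have x2 : x.1 0 1 = 0 := by
        apply mul_left_cancel₀ had
        linear_combination -c2
      have x3 : x.1 1 0 = 0 := by
        apply mul_left_cancel₀ had
        linear_combination c3
      refine ⟨x.1 0 0 - (x.1 0 0 - x.1 1 1) / (w.1 0 0 - w.1 1 1) * w.1 0 0,
        (x.1 0 0 - x.1 1 1) / (w.1 0 0 - w.1 1 1), by ring, by rw [x2, hb]; ring,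
        by rw [x3, hc]; ring, ?_⟩
      field_simp
      ring
    · refine ⟨x.1 0 0 - x.1 1 0 / w.1 1 0 * w.1 0 0, x.1 1 0 / w.1 1 0, by ring, ?_, ?_, ?_⟩
      · field_simp
        linear_combination c1
      · field_simp
      · field_simp
        linear_combination c3
  · refine ⟨x.1 0 0 - x.1 0 1 / w.1 0 1 * w.1 0 0, x.1 0 1 / w.1 0 1, by ring, ?_, ?_, ?_⟩
    · field_simp
    · field_simp
      linear_combination -c1
    · field_simp
      linear_combination -c2

theorem commute_of_inSpan {w x y : SLp p} (h : InSpan w x) (hy : y * w = w * y) :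
    y * x = x * y := by
  obtain ⟨a1, a2, a3, a4⟩ := mul4 y w
  obtain ⟨b1, b2, b3, b4⟩ := mul4 w y
  rw [hy] at a1 a2 a3 a4
  have c1 := a1.symm.trans b1
  have c2 := a2.symm.trans b2
  have c3 := a3.symm.trans b3
  have c4 := a4.symm.trans b4
  obtain ⟨d1, d2, d3, d4⟩ := mul4 y x
  obtain ⟨f1, f2, f3, f4⟩ := mul4 x y
  obtain ⟨α, β, e1, e2, e3, e4⟩ := h
  apply ext4
  · rw [d1, f1, e1, e2, e3]; linear_combination β * c1
  · rw [d2, f2, e1, e2, e4]; linear_combination β * c2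
  · rw [d3, f3, e1, e3, e4]; linear_combination β * c3
  · rw [d4, f4, e4, e2, e3]; linear_combination β * c4

/-- centralizers of good commuting elements agree -/
theorem commute_trans {w b x : SLp p} (hb : Good b) (hbw : w * b = b * w)
    (hx : x * b = b * x) : x * w = w * x :=
  (commute_of_inSpan (inSpan_of_commute hb.2 hx) hbw).symm

theorem card_span_trace (h5 : 5 ≤ p) {w : SLp p} (hw : tr w ^ 2 ≠ 4) (κ : ZMod p)
    (S : Finset (SLp p)) (hS : ∀ x ∈ S, x * w = w * x ∧ tr x = κ) : S.card ≤ 2 :=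
  two_sol h5 (w := w) (κ := κ) (fun h => hw h.1) S
    (fun x hx => ⟨inSpan_of_commute hw (hS x hx).1, (hS x hx).2⟩)

open Classical in
theorem card_centralizer (h5 : 5 ≤ p) {w : SLp p} (hw : tr w ^ 2 ≠ 4)
    (S : Finset (SLp p)) (hS : ∀ x ∈ S, x * w = w * x) : S.card ≤ 2 * p := by
  have := Finset.card_le_mul_card_image (f := tr) S 2 (by
    intro κ _
    exact card_span_trace h5 hw κ _ (fun x hx => by
      rw [Finset.mem_filter] at hx
      exact ⟨hS x hx.1, hx.2⟩))
  refine this.trans (Nat.mul_le_mul_left _ ?_)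
  calc _ ≤ Fintype.card (ZMod p) := Finset.card_le_univ _
    _ = p := ZMod.card p

open Classical in
theorem card_bad (h5 : 5 ≤ p) {w : SLp p} (hw : tr w ^ 2 ≠ 4)
    (S : Finset (SLp p)) (hS : ∀ x ∈ S, x * w = w * x ∧ ¬ Good x) : S.card ≤ 6 := by
  have h := Finset.card_le_mul_card_image (f := tr) S 2 (by
    intro κ _
    exact card_span_trace h5 hw κ _ (fun x hx => by
      rw [Finset.mem_filter] at hx
      exact ⟨(hS x hx.1).1, hx.2⟩))
  refine h.trans ?_
  have : S.image tr ⊆ {0, 2, -2} := by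
    intro κ hκ
    obtain ⟨x, hx, rfl⟩ := Finset.mem_image.1 hκ
    have := (hS x hx).2
    unfold Good at this
    simp only [Finset.mem_insert, Finset.mem_singleton]
    by_cases h0 : tr x = 0
    · exact Or.inl h0
    · right
      have h4 : tr x ^ 2 = 2 ^ 2 := by
        by_contra h4
        exact this ⟨h0, fun h => h4 (by rw [h]; norm_num)⟩
      exact sq_eq_sq_iff_eq_or_eq_neg.1 h4
  have h3 := (Finset.card_le_card this).trans Finset.card_le_three
  omega

open Classical in
theorem card_conj_into (h5 : 5 ≤ p) {t b : SLp p} (ht : Good t) (hb : Good b)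
    (S : Finset (SLp p)) (hS : ∀ g ∈ S, b * (g * t * g⁻¹) = (g * t * g⁻¹) * b) :
    S.card ≤ 4 * p := by
  have h := Finset.card_le_mul_card_image (f := fun g => g * t * g⁻¹) S (2 * p) (by
    intro y _
    rcases Finset.eq_empty_or_nonempty (S.filter (fun g => g * t * g⁻¹ = y)) with h0 | ⟨g0, hg0⟩
    · rw [h0]; simp
    · rw [← Finset.card_image_of_injective _ (mul_right_injective g0⁻¹)]
      refine card_centralizer h5 ht.2 _ ?_
      intro x hx
      obtain ⟨g, hg, rfl⟩ := Finset.mem_image.1 hx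
      rw [Finset.mem_filter] at hg hg0
      have e := hg.2.trans hg0.2.symm
      have : g * t = g0 * t * g0⁻¹ * g := by rw [← e]; group
      calc g0⁻¹ * g * t = g0⁻¹ * (g * t) := by group
        _ = t * (g0⁻¹ * g) := by rw [this]; group)
  have h2 : (S.image (fun g => g * t * g⁻¹)).card ≤ 2 :=
    card_span_trace h5 hb.2 (tr t) _ (by
      intro x hx
      obtain ⟨g, hg, rfl⟩ := Finset.mem_image.1 hx
      exact ⟨(hS g hg).symm, tr_conj _ _⟩)
  nlinarith


section Escape

variable {F G : Type*} [Field F] [Group G] [Finite G] [DecidableEq G]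

/-- functions in `V` vanishing on `S` -/
def vanish (V : Submodule F (G → F)) (S : Set G) : Submodule F (G → F) where
  carrier := {f | f ∈ V ∧ ∀ a ∈ S, f a = 0}
  add_mem' := by
    rintro f g ⟨hf, hf'⟩ ⟨hg, hg'⟩
    exact ⟨V.add_mem hf hg, fun a ha => by simp [hf' a ha, hg' a ha]⟩
  zero_mem' := ⟨V.zero_mem, fun a _ => rfl⟩
  smul_mem' := by
    rintro c f ⟨hf, hf'⟩
    exact ⟨V.smul_mem c hf, fun a ha => by simp [hf' a ha]⟩

theorem mem_vanish {V : Submodule F (G → F)} {S : Set G} {f : G → F} :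
    f ∈ vanish V S ↔ f ∈ V ∧ ∀ a ∈ S, f a = 0 := Iff.rfl

theorem gen_induction {A : Finset G} (hA : A⁻¹ = A) (hg : Subgroup.closure (A : Set G) = ⊤)
    (P : G → Prop) (h1 : P 1) (hm : ∀ a ∈ A, ∀ g, P g → P (a * g)) (g : G) : P g := by
  have hmem : g ∈ Subgroup.closure (A : Set G) := by rw [hg]; trivial
  induction hmem using Subgroup.closure_induction_left with
  | one => exact h1
  | mul_left x hx y hy h => exact hm x hx y h
  | inv_mul_cancel x hx y hy h =>
    refine hm x⁻¹ ?_ y h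
    rw [← hA]
    exact Finset.inv_mem_inv hx

theorem escape_vanish {A : Finset G} (h1 : (1 : G) ∈ A) (hA : A⁻¹ = A)
    (hg : Subgroup.closure (A : Set G) = ⊤) (V : Submodule F (G → F))
    (hV : ∀ a : G, ∀ f ∈ V, (fun g => f (g * a)) ∈ V) (D : ℕ) (hD : Module.finrank F V ≤ D) :
    vanish V ((A ^ D : Finset G) : Set G) = ⊥ := by
  have step : ∀ m : ℕ, vanish V ((A ^ (m + 1) : Finset G) : Set G) =
      vanish V ((A ^ m : Finset G) : Set G) → vanish V ((A ^ m : Finset G) : Set G) = ⊥ := by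
    intro m hm
    rw [eq_bot_iff]
    intro f hf
    have key : ∀ a : G, ∀ f ∈ vanish V ((A ^ m : Finset G) : Set G),
        (fun g => f (g * a)) ∈ vanish V ((A ^ m : Finset G) : Set G) := by
      intro a
      refine gen_induction hA hg (fun a => ∀ f ∈ vanish V ((A ^ m : Finset G) : Set G),
        (fun g => f (g * a)) ∈ vanish V ((A ^ m : Finset G) : Set G)) ?_ ?_ a
      · intro f hf
        simpa using hf
      · intro a ha g hg f hf
        have h2 := hg f hf
        have : (fun x => f (x * (a * g))) = (fun x => (fun y => f (y * g)) (x * a)) := by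
          funext x; simp [mul_assoc]
        rw [this]
        refine ⟨hV a _ h2.1, ?_⟩
        rw [← hm] at h2
        intro x hx
        apply h2.2
        rw [pow_succ]
        exact Finset.mul_mem_mul hx ha
    have hone : (1 : G) ∈ A ^ m := Finset.one_mem_pow h1
    rw [Submodule.mem_bot]
    funext a
    have := (key a f hf).2 1 hone
    simpa using this
  have mono : ∀ m : ℕ, vanish V ((A ^ (m + 1) : Finset G) : Set G) ≤
      vanish V ((A ^ m : Finset G) : Set G) := by
    intro m f hf
    exact ⟨hf.1, fun a ha => hf.2 a (Finset.pow_subset_pow_right h1 (Nat.le_succ m) ha)⟩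
  have main : ∀ m : ℕ, vanish V ((A ^ m : Finset G) : Set G) = ⊥ ∨
      Module.finrank F (vanish V ((A ^ m : Finset G) : Set G)) + m ≤ D := by
    intro m
    induction m with
    | zero =>
      right
      refine le_trans ?_ hD
      exact Submodule.finrank_mono (fun f hf => hf.1)
    | succ m ih =>
      rcases ih with h | h
      · left
        rw [eq_bot_iff, ← h]
        exact mono m
      · by_cases he : vanish V ((A ^ (m + 1) : Finset G) : Set G) =
          vanish V ((A ^ m : Finset G) : Set G)
        · left
          rw [he]; exact step m he
        · right
          have := Submodule.finrank_lt_finrank_of_lt (lt_of_le_of_ne (mono m) he)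
          omega
  rcases main D with h | h
  · exact h
  · apply Submodule.finrank_eq_zero.1
    omega

theorem small_test (V : Submodule F (G → F)) (S : Finset G)
    (hS : vanish V (S : Set G) = ⊥) (D : ℕ) (hD : Module.finrank F V ≤ D) :
    ∃ B ⊆ S, B.card ≤ D ∧ vanish V (B : Set G) = ⊥ := by
  have main : ∀ m : ℕ, ∃ B ⊆ S, B.card ≤ m ∧ (vanish V (B : Set G) = ⊥ ∨
      Module.finrank F (vanish V (B : Set G)) + m ≤ D) := by
    intro m
    induction m with
    | zero =>
      refine ⟨∅, by simp, by simp, Or.inr ?_⟩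
      refine le_trans ?_ hD
      exact Submodule.finrank_mono (fun f hf => hf.1)
    | succ m ih =>
      obtain ⟨B, hBS, hBc, h | h⟩ := ih
      · exact ⟨B, hBS, by omega, Or.inl h⟩
      · by_cases hb : vanish V (B : Set G) = ⊥
        · exact ⟨B, hBS, by omega, Or.inl hb⟩
        · obtain ⟨f, hf, hf0⟩ := Submodule.exists_mem_ne_zero_of_ne_bot hb
          have : ∃ a ∈ S, f a ≠ 0 := by
            by_contra hc
            push Not at hc
            apply hf0
            have : f ∈ vanish V (S : Set G) := ⟨hf.1, hc⟩
            rw [hS] at this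
            simpa using this
          obtain ⟨a, haS, ha⟩ := this
          refine ⟨insert a B, Finset.insert_subset haS hBS,
            (Finset.card_insert_le _ _).trans (by omega), Or.inr ?_⟩
          have hlt : vanish V ((insert a B : Finset G) : Set G) < vanish V (B : Set G) := by
            refine lt_of_le_of_ne (fun g hg => ⟨hg.1, fun x hx => hg.2 x (by
              simp at hx ⊢; exact Or.inr hx)⟩) ?_
            intro he
            rw [← he] at hf
            exact ha (hf.2 a (by simp))
          have := Submodule.finrank_lt_finrank_of_lt hlt
          omega
  obtain ⟨B, hBS, hBc, h | h⟩ := main D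
  · exact ⟨B, hBS, hBc, h⟩
  · exact ⟨B, hBS, hBc, Submodule.finrank_eq_zero.1 (by omega)⟩

end Escape

/-- coordinate functions -/
def coordFn (i : Fin 5) : SLp p → ZMod p := fun g =>
  ![1, g.1 0 0, g.1 0 1, g.1 1 0, g.1 1 1] i

/-- polynomials of degree at most one -/
def polyL (p : ℕ) [Fact p.Prime] : Submodule (ZMod p) (SLp p → ZMod p) :=
  Submodule.span (ZMod p) (Set.range coordFn)

/-- polynomials of degree at most three -/
def polyV (p : ℕ) [Fact p.Prime] : Submodule (ZMod p) (SLp p → ZMod p) := polyL p ^ 3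

theorem coord_mem (i : Fin 5) : (coordFn i : SLp p → ZMod p) ∈ polyL p :=
  Submodule.subset_span ⟨i, rfl⟩

theorem finrank_span_pow {K R : Type*} [Field K] [CommRing R] [Algebra K R] [DecidableEq R]
    (s : Finset R) (n : ℕ) :
    Module.finrank K (Submodule.span K (s : Set R) ^ n : Submodule K R) ≤ s.card ^ n := by
  rw [Submodule.span_pow, ← Finset.coe_pow]
  exact (finrank_span_finset_le_card _).trans Finset.card_pow_le

/-- the escape exponent -/
@[irreducible] def D0 : ℕ := 125

theorem D0_eq : D0 = 125 := by unfold D0; rfl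

theorem finrank_polyV : Module.finrank (ZMod p) (polyV p) ≤ D0 := by
  classical
  have h : polyL p = Submodule.span (ZMod p)
      ((Finset.univ.image (coordFn (p := p)) : Finset (SLp p → ZMod p)) :
        Set (SLp p → ZMod p)) := by
    unfold polyL
    congr 1
    rw [Finset.coe_image, Finset.coe_univ, Set.image_univ]
  unfold polyV
  rw [h, D0_eq]
  refine (finrank_span_pow _ 3).trans ?_
  calc _ ≤ 5 ^ 3 := Nat.pow_le_pow_left (Finset.card_image_le.trans (by simp)) 3
    _ = 125 := by norm_num

/-- right translation -/
def transl (a : SLp p) : (SLp p → ZMod p) →ₐ[ZMod p] (SLp p → ZMod p) where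
  toFun f := fun g => f (g * a)
  map_one' := rfl
  map_mul' _ _ := rfl
  map_zero' := rfl
  map_add' _ _ := rfl
  commutes' _ := rfl

theorem polyV_inv (a : SLp p) (f : SLp p → ZMod p) (hf : f ∈ polyV p) :
    (fun g => f (g * a)) ∈ polyV p := by
  have hL : (polyL p).map (transl a).toLinearMap ≤ polyL p := by
    unfold polyL
    rw [Submodule.map_span, Submodule.span_le]
    rintro _ ⟨_, ⟨i, rfl⟩, rfl⟩
    show (fun g => coordFn i (g * a)) ∈ polyL p
    fin_cases i
    · exact coord_mem 0
    · have : (fun g => coordFn (p := p) 1 (g * a)) = a.1 0 0 • coordFn 1 + a.1 1 0 • coordFn 2 := by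
        funext g
        have := (mul4 g a).1
        simp [coordFn] at this ⊢
        rw [this]; ring
      show (fun g => coordFn (p := p) 1 (g * a)) ∈ _
      rw [this]
      exact Submodule.add_mem _ (Submodule.smul_mem _ _ (coord_mem 1))
        (Submodule.smul_mem _ _ (coord_mem 2))
    · have : (fun g => coordFn (p := p) 2 (g * a)) = a.1 0 1 • coordFn 1 + a.1 1 1 • coordFn 2 := by
        funext g
        have := (mul4 g a).2.1
        simp [coordFn] at this ⊢
        rw [this]; ring
      show (fun g => coordFn (p := p) 2 (g * a)) ∈ _
      rw [this]
      exact Submodule.add_mem _ (Submodule.smul_mem _ _ (coord_mem 1))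
        (Submodule.smul_mem _ _ (coord_mem 2))
    · have : (fun g => coordFn (p := p) 3 (g * a)) = a.1 0 0 • coordFn 3 + a.1 1 0 • coordFn 4 := by
        funext g
        have := (mul4 g a).2.2.1
        simp [coordFn] at this ⊢
        rw [this]; ring
      show (fun g => coordFn (p := p) 3 (g * a)) ∈ _
      rw [this]
      exact Submodule.add_mem _ (Submodule.smul_mem _ _ (coord_mem 3))
        (Submodule.smul_mem _ _ (coord_mem 4))
    · have : (fun g => coordFn (p := p) 4 (g * a)) = a.1 0 1 • coordFn 3 + a.1 1 1 • coordFn 4 := by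
        funext g
        have := (mul4 g a).2.2.2
        simp [coordFn] at this ⊢
        rw [this]; ring
      show (fun g => coordFn (p := p) 4 (g * a)) ∈ _
      rw [this]
      exact Submodule.add_mem _ (Submodule.smul_mem _ _ (coord_mem 3))
        (Submodule.smul_mem _ _ (coord_mem 4))
  have h3 : (polyV p).map (transl a).toLinearMap ≤ polyV p := by
    unfold polyV
    rw [Submodule.map_pow]
    exact pow_le_pow_left' hL 3
  exact h3 ⟨f, hf, rfl⟩

theorem prod3_mem {f g h : SLp p → ZMod p} (hf : f ∈ polyL p) (hg : g ∈ polyL p)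
    (hh : h ∈ polyL p) : f * g * h ∈ polyV p := by
  unfold polyV
  rw [pow_succ, pow_two]
  exact Submodule.mul_mem_mul (Submodule.mul_mem_mul hf hg) hh

/-- there is a bounded test set in a bounded power of `A` -/
theorem escape (A : Finset (SLp p)) (h1 : 1 ∈ A) (hA : A⁻¹ = A)
    (hg : Subgroup.closure (A : Set (SLp p)) = ⊤) :
    ∃ B ⊆ A ^ D0, B.card ≤ D0 ∧ ∀ f ∈ polyV p, f ≠ 0 → ∃ b ∈ B, f b ≠ 0 := by
  obtain ⟨B, hB, hc, hv⟩ := small_test (polyV p) (A ^ D0)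
    (escape_vanish h1 hA hg (polyV p) polyV_inv D0 finrank_polyV) D0 finrank_polyV
  refine ⟨B, hB, hc, fun f hf hf0 => ?_⟩
  by_contra hcon
  push Not at hcon
  apply hf0
  have : f ∈ vanish (polyV p) (B : Set (SLp p)) := ⟨hf, hcon⟩
  rw [hv] at this
  simpa using this

/-- a good element in a bounded power of `A` -/
theorem exists_good (h5 : 5 ≤ p) (A : Finset (SLp p)) (h1 : 1 ∈ A) (hA : A⁻¹ = A)
    (hg : Subgroup.closure (A : Set (SLp p)) = ⊤) : ∃ t ∈ A ^ D0, Good t := by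
  obtain ⟨B, hB, -, h⟩ := escape A h1 hA hg
  have htr : (coordFn 1 + coordFn 4 : SLp p → ZMod p) ∈ polyL p :=
    Submodule.add_mem _ (coord_mem 1) (coord_mem 4)
  have htr' : (coordFn 1 + coordFn 4 - (2 : ZMod p) • coordFn 0 : SLp p → ZMod p) ∈ polyL p :=
    Submodule.sub_mem _ htr (Submodule.smul_mem _ _ (coord_mem 0))
  have htr'' : (coordFn 1 + coordFn 4 + (2 : ZMod p) • coordFn 0 : SLp p → ZMod p) ∈ polyL p :=
    Submodule.add_mem _ htr (Submodule.smul_mem _ _ (coord_mem 0))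
  have hval : ∀ g : SLp p, ((coordFn 1 + coordFn 4) * (coordFn 1 + coordFn 4 - (2 : ZMod p) • coordFn 0) *
    (coordFn 1 + coordFn 4 + (2 : ZMod p) • coordFn 0) : SLp p → ZMod p) g =
      tr g * (tr g ^ 2 - 4) := by
    intro g
    simp [coordFn, tr]
    ring
  obtain ⟨b, hb, hb0⟩ := h _ (prod3_mem htr htr' htr'') (by
    intro h0
    have hx := congrFun h0 (⟨!![0, -1; 1, 1], by simp [Matrix.det_fin_two]⟩ : SLp p)
    have this := (hval _).symm.trans hx
    change _ = (0 : ZMod p) at this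
    simp [tr] at this
    apply three_ne h5
    linear_combination -this)
  rw [hval] at hb0
  refine ⟨b, hB hb, left_ne_zero_of_mul hb0, fun h => right_ne_zero_of_mul hb0 (by rw [h]; ring)⟩


/-! ### The growth lemma -/

/-- a linear form in the matrix entries -/
theorem lin_mem (c1 c2 c3 c4 : ZMod p) :
    (fun g : SLp p => c1 * g.1 0 0 + c2 * g.1 0 1 + c3 * g.1 1 0 + c4 * g.1 1 1) ∈ polyL p := by
  have : (fun g : SLp p => c1 * g.1 0 0 + c2 * g.1 0 1 + c3 * g.1 1 0 + c4 * g.1 1 1) =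
    c1 • coordFn 1 + c2 • coordFn 2 + c3 • coordFn 3 + c4 • coordFn 4 := by
    funext g
    simp [coordFn]
  rw [this]
  exact Submodule.add_mem _ (Submodule.add_mem _ (Submodule.add_mem _
    (Submodule.smul_mem _ _ (coord_mem 1)) (Submodule.smul_mem _ _ (coord_mem 2)))
    (Submodule.smul_mem _ _ (coord_mem 3))) (Submodule.smul_mem _ _ (coord_mem 4))

theorem lin_mul_mem (c1 c2 c3 c4 d1 d2 d3 d4 : ZMod p) :
    (fun g : SLp p => (c1 * g.1 0 0 + c2 * g.1 0 1 + c3 * g.1 1 0 + c4 * g.1 1 1) *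
      (d1 * g.1 0 0 + d2 * g.1 0 1 + d3 * g.1 1 0 + d4 * g.1 1 1)) ∈ polyV p := by
  have := prod3_mem (lin_mem c1 c2 c3 c4) (lin_mem d1 d2 d3 d4) (coord_mem (p := p) 0)
  convert this using 1
  funext g
  simp [coordFn]

/-- pairing of a matrix `m` with `y` -/
def pair (m1 m2 m3 m4 : ZMod p) (y : SLp p) : ZMod p :=
  m1 * y.1 0 0 + m2 * y.1 1 0 + m3 * y.1 0 1 + m4 * y.1 1 1

theorem conj4 (h y : SLp p) :
    (h * y * h⁻¹).1 0 0 = (h.1 0 0 * y.1 0 0 + h.1 0 1 * y.1 1 0) * h.1 1 1 -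
      (h.1 0 0 * y.1 0 1 + h.1 0 1 * y.1 1 1) * h.1 1 0 ∧
    (h * y * h⁻¹).1 0 1 = -(h.1 0 0 * y.1 0 0 + h.1 0 1 * y.1 1 0) * h.1 0 1 +
      (h.1 0 0 * y.1 0 1 + h.1 0 1 * y.1 1 1) * h.1 0 0 ∧
    (h * y * h⁻¹).1 1 0 = (h.1 1 0 * y.1 0 0 + h.1 1 1 * y.1 1 0) * h.1 1 1 -
      (h.1 1 0 * y.1 0 1 + h.1 1 1 * y.1 1 1) * h.1 1 0 ∧
    (h * y * h⁻¹).1 1 1 = -(h.1 1 0 * y.1 0 0 + h.1 1 1 * y.1 1 0) * h.1 0 1 +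
      (h.1 1 0 * y.1 0 1 + h.1 1 1 * y.1 1 1) * h.1 0 0 := by
  obtain ⟨h1, h2, h3, h4⟩ := mul4 (h * y) h⁻¹
  obtain ⟨k1, k2, k3, k4⟩ := mul4 h y
  obtain ⟨i1, i2, i3, i4⟩ := inv4 h
  rw [h1, h2, h3, h4, k1, k2, k3, k4, i1, i2, i3, i4]
  refine ⟨?_, ?_, ?_, ?_⟩ <;> ring

theorem pair_mem (m1 m2 m3 m4 : ZMod p) (y : SLp p) :
    (fun h : SLp p => pair m1 m2 m3 m4 (h * y * h⁻¹)) ∈ polyV p := by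
  have := Submodule.add_mem _ (Submodule.add_mem _ (Submodule.add_mem _
    (lin_mul_mem (y.1 0 0) (y.1 1 0) 0 0 0 (-m3) 0 m1)
    (lin_mul_mem (y.1 0 1) (y.1 1 1) 0 0 m3 0 (-m1) 0))
    (lin_mul_mem 0 0 (y.1 0 0) (y.1 1 0) 0 (-m4) 0 m2))
    (lin_mul_mem 0 0 (y.1 0 1) (y.1 1 1) m4 0 (-m2) 0)
  convert this using 1
  funext h
  obtain ⟨h1, h2, h3, h4⟩ := conj4 h y
  simp only [Pi.add_apply, pair]
  rw [h1, h2, h3, h4]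
  ring

/-- upper unipotent -/
def up (x : ZMod p) : SLp p := ⟨!![1, x; 0, 1], by simp [Matrix.det_fin_two]⟩
/-- lower unipotent -/
def lo (x : ZMod p) : SLp p := ⟨!![1, 0; x, 1], by simp [Matrix.det_fin_two]⟩

theorem up4 (x : ZMod p) : (up x).1 0 0 = 1 ∧ (up x).1 0 1 = x ∧ (up x).1 1 0 = 0 ∧
    (up x).1 1 1 = 1 := by simp [up]
theorem lo4 (x : ZMod p) : (lo x).1 0 0 = 1 ∧ (lo x).1 0 1 = 0 ∧ (lo x).1 1 0 = x ∧
    (lo x).1 1 1 = 1 := by simp [lo]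

theorem pair_up (m1 m2 m3 m4 x : ZMod p) (y : SLp p) :
    pair m1 m2 m3 m4 (up x * y * (up x)⁻¹) = pair m1 m2 m3 m4 y +
      x * (m1 * y.1 1 0 + m3 * (y.1 1 1 - y.1 0 0) - m4 * y.1 1 0) - x ^ 2 * (m3 * y.1 1 0) := by
  obtain ⟨h1, h2, h3, h4⟩ := conj4 (up x) y
  obtain ⟨k1, k2, k3, k4⟩ := up4 x
  unfold pair
  rw [h1, h2, h3, h4, k1, k2, k3, k4]
  ring

theorem pair_lo (m1 m2 m3 m4 x : ZMod p) (y : SLp p) :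
    pair m1 m2 m3 m4 (lo x * y * (lo x)⁻¹) = pair m1 m2 m3 m4 y +
      x * (m4 * y.1 0 1 + m2 * (y.1 0 0 - y.1 1 1) - m1 * y.1 0 1) - x ^ 2 * (m2 * y.1 0 1) := by
  obtain ⟨h1, h2, h3, h4⟩ := conj4 (lo x) y
  obtain ⟨k1, k2, k3, k4⟩ := lo4 x
  unfold pair
  rw [h1, h2, h3, h4, k1, k2, k3, k4]
  ring

theorem not_scalar {y : SLp p} (hy : tr y ^ 2 ≠ 4) :
    ¬ (y.1 0 1 = 0 ∧ y.1 1 0 = 0 ∧ y.1 0 0 = y.1 1 1) := by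
  rintro ⟨h1, h2, h3⟩
  apply hy
  have := det4 y
  unfold tr
  rw [h1, h2, h3] at this
  rw [h3]
  linear_combination 4 * this

theorem exists_conj_lo (h5 : 5 ≤ p) {y : SLp p} (hy : tr y ^ 2 ≠ 4) :
    ∃ h : SLp p, (h * y * h⁻¹).1 1 0 ≠ 0 := by
  have h2 := two_ne h5
  by_contra hc
  push Not at hc
  have e0 : ∀ h : SLp p, pair 0 1 0 0 (h * y * h⁻¹) = 0 := fun h => by
    simp [pair, hc h]
  have a0 := e0 1
  have a1 := e0 (lo 1)
  have a2 := e0 (lo (-1))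
  rw [pair_lo] at a1 a2
  simp only [one_mul, inv_one, mul_one] at a0
  rw [a0] at a1 a2
  have hy10 : y.1 1 0 = 0 := by simpa [pair] using a0
  refine not_scalar hy ⟨?_, hy10, ?_⟩
  · apply mul_left_cancel₀ h2
    linear_combination -a1 - a2
  · apply mul_left_cancel₀ h2
    linear_combination a1 - a2

theorem exists_conj_up (h5 : 5 ≤ p) {y : SLp p} (hy : tr y ^ 2 ≠ 4) :
    ∃ h : SLp p, (h * y * h⁻¹).1 0 1 ≠ 0 := by
  have h2 := two_ne h5
  by_contra hc
  push Not at hc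
  have e0 : ∀ h : SLp p, pair 0 0 1 0 (h * y * h⁻¹) = 0 := fun h => by
    simp [pair, hc h]
  have a0 := e0 1
  have a1 := e0 (up 1)
  have a2 := e0 (up (-1))
  rw [pair_up] at a1 a2
  simp only [one_mul, inv_one, mul_one] at a0
  rw [a0] at a1 a2
  have hy10 : y.1 0 1 = 0 := by simpa [pair] using a0
  refine not_scalar hy ⟨hy10, ?_, ?_⟩
  · apply mul_left_cancel₀ h2
    linear_combination -a1 - a2
  · apply mul_left_cancel₀ h2
    linear_combination -a1 + a2

theorem pair_nonvanish (h5 : 5 ≤ p) {y : SLp p} (hy : Good y) {m1 m2 m3 m4 : ZMod p}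
    (h0 : ∀ h : SLp p, pair m1 m2 m3 m4 (h * y * h⁻¹) = 0) :
    m1 = 0 ∧ m2 = 0 ∧ m3 = 0 ∧ m4 = 0 := by
  have h2 := two_ne h5
  have cj : ∀ k h : SLp p, k * (h * y * h⁻¹) * k⁻¹ = (k * h) * y * (k * h)⁻¹ := by
    intro k h; group
  have a : ∀ k h : SLp p, pair m1 m2 m3 m4 (k * (h * y * h⁻¹) * k⁻¹) = 0 := by
    intro k h; rw [cj]; exact h0 _
  obtain ⟨u, hu⟩ := exists_conj_lo h5 hy.2
  obtain ⟨v, hv⟩ := exists_conj_up h5 hy.2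
  have u0 := h0 u
  have u1 := a (up 1) u
  have u2 := a (up (-1)) u
  have v0 := h0 v
  have v1 := a (lo 1) v
  have v2 := a (lo (-1)) v
  rw [pair_up, u0] at u1 u2
  rw [pair_lo, v0] at v1 v2
  have hm3 : m3 = 0 := by
    apply mul_right_cancel₀ hu
    apply mul_left_cancel₀ h2
    linear_combination -u1 - u2
  have hm2 : m2 = 0 := by
    apply mul_right_cancel₀ hv
    apply mul_left_cancel₀ h2
    linear_combination -v1 - v2
  have hm14 : m1 = m4 := by
    apply mul_right_cancel₀ hu
    rw [hm3] at u1
    linear_combination u1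
  have t0 := h0 1
  simp only [one_mul, inv_one, mul_one] at t0
  have hm1 : m1 = 0 := by
    apply mul_right_cancel₀ hy.1
    unfold pair at t0
    unfold tr
    rw [hm2, hm3, ← hm14] at t0
    linear_combination t0
  exact ⟨hm1, hm2, hm3, hm14 ▸ hm1⟩

/-- the triple product -/
def trip (w x v : SLp p) : ZMod p :=
  (w.1 0 1 * x.1 1 0 - x.1 0 1 * w.1 1 0) * (v.1 0 0 - v.1 1 1) +
  (w.1 0 0 * x.1 0 1 + w.1 0 1 * x.1 1 1 - x.1 0 0 * w.1 0 1 - x.1 0 1 * w.1 1 1) * v.1 1 0 +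
  (w.1 1 0 * x.1 0 0 + w.1 1 1 * x.1 1 0 - x.1 1 0 * w.1 0 0 - x.1 1 1 * w.1 1 0) * v.1 0 1

theorem trip_mul (w x : SLp p) : ∃ m1 m2 m3 m4 : ZMod p,
    (∀ Y, trip w x (x * Y) = pair m1 m2 m3 m4 Y) ∧
    (m1 = 0 ∧ m2 = 0 ∧ m3 = 0 ∧ m4 = 0 → x * w = w * x) := by
  obtain ⟨a, ha⟩ : ∃ a, a = w.1 0 1 * x.1 1 0 - x.1 0 1 * w.1 1 0 := ⟨_, rfl⟩
  obtain ⟨b, hb⟩ : ∃ b, b = w.1 0 0 * x.1 0 1 + w.1 0 1 * x.1 1 1 - x.1 0 0 * w.1 0 1 -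
    x.1 0 1 * w.1 1 1 := ⟨_, rfl⟩
  obtain ⟨c, hc⟩ : ∃ c, c = w.1 1 0 * x.1 0 0 + w.1 1 1 * x.1 1 0 - x.1 1 0 * w.1 0 0 -
    x.1 1 1 * w.1 1 0 := ⟨_, rfl⟩
  refine ⟨a * x.1 0 0 + b * x.1 1 0, a * x.1 0 1 + b * x.1 1 1, c * x.1 0 0 - a * x.1 1 0,
    c * x.1 0 1 - a * x.1 1 1, ?_, ?_⟩
  · intro Y
    unfold trip pair
    obtain ⟨h1, h2, h3, h4⟩ := mul4 x Y
    rw [h1, h2, h3, h4, ← ha, ← hb, ← hc]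
    ring
  · rintro ⟨e1, e2, e3, e4⟩
    have hd := det4 x
    have a0 : a = 0 := by linear_combination x.1 1 1 * e1 - x.1 1 0 * e2 - a * hd
    have b0 : b = 0 := by linear_combination x.1 0 0 * e2 - x.1 0 1 * e1 - b * hd
    have c0 : c = 0 := by linear_combination x.1 1 1 * e3 - x.1 1 0 * e4 - c * hd
    obtain ⟨h1, h2, h3, h4⟩ := mul4 x w
    obtain ⟨k1, k2, k3, k4⟩ := mul4 w x
    rw [a0] at ha
    rw [b0] at hb
    rw [c0] at hc
    apply ext4
    · rw [h1, k1]; linear_combination ha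
    · rw [h2, k2]; linear_combination hb
    · rw [h3, k3]; linear_combination hc
    · rw [h4, k4]; linear_combination -ha

theorem trip_indep {w x v : SLp p} (hD : trip w x v ≠ 0) {d1 d2 d3 d4 : ZMod p}
    (h1 : d1 + d4 = 0)
    (hw : d1 * w.1 0 0 + d2 * w.1 1 0 + d3 * w.1 0 1 + d4 * w.1 1 1 = 0)
    (hx : d1 * x.1 0 0 + d2 * x.1 1 0 + d3 * x.1 0 1 + d4 * x.1 1 1 = 0)
    (hv : d1 * v.1 0 0 + d2 * v.1 1 0 + d3 * v.1 0 1 + d4 * v.1 1 1 = 0) :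
    d1 = 0 ∧ d2 = 0 ∧ d3 = 0 ∧ d4 = 0 := by
  have h4 : d4 = - d1 := by linear_combination h1
  subst h4
  obtain ⟨a, ha⟩ : ∃ a, a = w.1 0 0 - w.1 1 1 := ⟨_, rfl⟩
  obtain ⟨b, hb⟩ : ∃ b, b = x.1 0 0 - x.1 1 1 := ⟨_, rfl⟩
  obtain ⟨c, hc⟩ : ∃ c, c = v.1 0 0 - v.1 1 1 := ⟨_, rfl⟩
  have hw' : d1 * a + d2 * w.1 1 0 + d3 * w.1 0 1 = 0 := by rw [ha]; linear_combination hw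
  have hx' : d1 * b + d2 * x.1 1 0 + d3 * x.1 0 1 = 0 := by rw [hb]; linear_combination hx
  have hv' : d1 * c + d2 * v.1 1 0 + d3 * v.1 0 1 = 0 := by rw [hc]; linear_combination hv
  have hT : trip w x v = (w.1 0 1 * x.1 1 0 - x.1 0 1 * w.1 1 0) * c +
     (a * x.1 0 1 - b * w.1 0 1) * v.1 1 0 + (b * w.1 1 0 - a * x.1 1 0) * v.1 0 1 := by
    rw [ha, hb, hc]; unfold trip; ring
  rw [hT] at hD
  have e1 : d1 = 0 := by
    apply mul_left_cancel₀ hD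
    linear_combination (w.1 0 1 * x.1 1 0 - x.1 0 1 * w.1 1 0) * hv' +
      (x.1 0 1 * v.1 1 0 - v.1 0 1 * x.1 1 0) * hw' + (v.1 0 1 * w.1 1 0 - w.1 0 1 * v.1 1 0) * hx'
  have e2 : d2 = 0 := by
    apply mul_left_cancel₀ hD
    linear_combination (a * x.1 0 1 - b * w.1 0 1) * hv' +
      (b * v.1 0 1 - c * x.1 0 1) * hw' + (c * w.1 0 1 - a * v.1 0 1) * hx'
  have e3 : d3 = 0 := by
    apply mul_left_cancel₀ hD
    linear_combination (b * w.1 1 0 - a * x.1 1 0) * hv' +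
      (c * x.1 1 0 - b * v.1 1 0) * hw' + (a * v.1 1 0 - c * w.1 1 0) * hx'
  refine ⟨e1, e2, e3, by rw [e1]; ring⟩

theorem tr_mul (x y : SLp p) : tr (x * y) = x.1 0 0 * y.1 0 0 + x.1 0 1 * y.1 1 0 +
    (x.1 1 0 * y.1 0 1 + x.1 1 1 * y.1 1 1) := by
  unfold tr
  rw [(mul4 x y).1, (mul4 x y).2.2.2]

theorem tr_inv_mul (x y : SLp p) : tr (x⁻¹ * y) = tr x * tr y - tr (x * y) := by
  rw [tr_mul, tr_mul, (inv4 x).1, (inv4 x).2.1, (inv4 x).2.2.1, (inv4 x).2.2.2]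
  unfold tr
  ring

theorem fib {w v x y z : SLp p} (hD : trip w x v ≠ 0)
    (hy1 : tr y = tr x) (hz1 : tr z = tr x) (hy2 : tr (y * w) = tr (x * w))
    (hz2 : tr (z * w) = tr (x * w)) (hy3 : tr (y * v) = tr (x * v)) (hz3 : tr (z * v) = tr (x * v))
    (hyx : y ≠ x) (hzx : z ≠ x) : y = z := by
  rw [tr_mul, tr_mul] at hy2 hz2 hy3 hz3
  unfold tr at hy1 hz1
  have key : ∀ y : SLp p, y.1 0 0 + y.1 1 1 = x.1 0 0 + x.1 1 1 →
     y.1 0 0 * w.1 0 0 + y.1 0 1 * w.1 1 0 + (y.1 1 0 * w.1 0 1 + y.1 1 1 * w.1 1 1) =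
     x.1 0 0 * w.1 0 0 + x.1 0 1 * w.1 1 0 + (x.1 1 0 * w.1 0 1 + x.1 1 1 * w.1 1 1) →
     y.1 0 0 * v.1 0 0 + y.1 0 1 * v.1 1 0 + (y.1 1 0 * v.1 0 1 + y.1 1 1 * v.1 1 1) =
     x.1 0 0 * v.1 0 0 + x.1 0 1 * v.1 1 0 + (x.1 1 0 * v.1 0 1 + x.1 1 1 * v.1 1 1) →
     y ≠ x → ∃ c d1 d2 d3 d4 : ZMod p, c ≠ 0 ∧
      y.1 0 0 = x.1 0 0 + d1 ∧ y.1 0 1 = x.1 0 1 + d2 ∧ y.1 1 0 = x.1 1 0 + d3 ∧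
      y.1 1 1 = x.1 1 1 + d4 ∧ d1 + d4 = 0 ∧
      d1 * w.1 0 0 + d2 * w.1 1 0 + d3 * w.1 0 1 + d4 * w.1 1 1 = 0 ∧
      d1 * x.1 0 0 + d2 * x.1 1 0 + d3 * x.1 0 1 + d4 * x.1 1 1 = c ∧
      d1 * v.1 0 0 + d2 * v.1 1 0 + d3 * v.1 0 1 + d4 * v.1 1 1 = 0 ∧
      d1 * d4 - d2 * d3 = c := by
    intro y h1 hw hv hne
    have a1 : (y.1 0 0 - x.1 0 0) + (y.1 1 1 - x.1 1 1) = 0 := by linear_combination h1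
    have a2 : (y.1 0 0 - x.1 0 0) * w.1 0 0 + (y.1 0 1 - x.1 0 1) * w.1 1 0 +
      (y.1 1 0 - x.1 1 0) * w.1 0 1 + (y.1 1 1 - x.1 1 1) * w.1 1 1 = 0 := by linear_combination hw
    have a3 : (y.1 0 0 - x.1 0 0) * v.1 0 0 + (y.1 0 1 - x.1 0 1) * v.1 1 0 +
      (y.1 1 0 - x.1 1 0) * v.1 0 1 + (y.1 1 1 - x.1 1 1) * v.1 1 1 = 0 := by linear_combination hv
    refine ⟨_, y.1 0 0 - x.1 0 0, y.1 0 1 - x.1 0 1, y.1 1 0 - x.1 1 0, y.1 1 1 - x.1 1 1,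
      ?_, by ring, by ring, by ring, by ring, a1, a2, rfl, a3, ?_⟩
    · intro hc
      obtain ⟨e1, e2, e3, e4⟩ := trip_indep hD a1 a2 hc a3
      apply hne
      exact ext4 (sub_eq_zero.1 e1) (sub_eq_zero.1 e2) (sub_eq_zero.1 e3) (sub_eq_zero.1 e4)
    · linear_combination det4 y - det4 x - (x.1 0 0 + x.1 1 1) * h1
  obtain ⟨c, d1, d2, d3, d4, hc, y1, y2, y3, y4, s1, s2, s3, s4, s5⟩ := key y hy1 hy2 hy3 hyx
  obtain ⟨c', d1', d2', d3', d4', hc', z1, z2, z3, z4, t1, t2, t3, t4, t5⟩ :=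
    key z hz1 hz2 hz3 hzx
  obtain ⟨e1, e2, e3, e4⟩ := trip_indep hD (d1 := c' * d1 - c * d1') (d2 := c' * d2 - c * d2')
    (d3 := c' * d3 - c * d3') (d4 := c' * d4 - c * d4')
    (by linear_combination c' * s1 - c * t1) (by linear_combination c' * s2 - c * t2)
    (by linear_combination c' * s3 - c * t3) (by linear_combination c' * s4 - c * t4)
  have hcc : c = c' := by
    apply mul_left_cancel₀ hc
    apply mul_left_cancel₀ hc'
    have : c' ^ 2 * (d1 * d4 - d2 * d3) = c ^ 2 * (d1' * d4' - d2' * d3') := by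
      linear_combination c' * d4 * e1 + c * d1' * e4 - c' * d3 * e2 - c * d2' * e3
    rw [s5, t5] at this
    linear_combination -this
  subst hcc
  have f : ∀ {a b : ZMod p}, c * a - c * b = 0 → a = b := by
    intro a b h
    exact mul_left_cancel₀ hc (sub_eq_zero.1 h)
  apply ext4
  · rw [y1, z1, f e1]
  · rw [y2, z2, f e2]
  · rw [y3, z3, f e3]
  · rw [y4, z4, f e4]


theorem commute_card (h5 : 5 ≤ p) {w : SLp p} {τ : ZMod p} (hτ : τ ^ 2 ≠ 4)
    (hw : ¬ (w.1 0 1 = 0 ∧ w.1 1 0 = 0 ∧ w.1 0 0 = w.1 1 1)) (S : Finset (SLp p))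
    (hS : ∀ x ∈ S, x * w = w * x ∧ tr x = τ) : S.card ≤ 2 := by
  apply two_sol h5 (w := w) (κ := τ) (fun h => hτ h.2)
  intro x hx
  obtain ⟨hc, ht⟩ := hS x hx
  refine ⟨?_, ht⟩
  obtain ⟨α, β, e1, e2, e3, e4⟩ := inSpan_of_commute (w := x) (x := w) (by rw [ht]; exact hτ) hc.symm
  have hβ : β ≠ 0 := by
    rintro rfl
    apply hw
    rw [e1, e2, e3, e4]
    simp
  refine ⟨-α / β, 1 / β, ?_, ?_, ?_, ?_⟩
  · rw [e1]; field_simp; ring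
  · rw [e2]; field_simp
  · rw [e3]; field_simp
  · rw [e4]; field_simp; ring

theorem growth_fibre (h5 : 5 ≤ p) {τ : ZMod p} (hτ0 : τ ≠ 0) (hτ : τ ^ 2 ≠ 4)
    {B O Z : Finset (SLp p)} (hO : ∀ x ∈ O, tr x = τ) (hBc : B.card ≤ D0)
    (hB : ∀ f ∈ polyV p, f ≠ 0 → ∃ b ∈ B, f b ≠ 0)
    (hZ : ∀ x ∈ O, ∀ y ∈ O, ∀ h ∈ B, x * h * y ∈ Z) {w : SLp p} (hw1 : w ≠ 1) :
    (O.filter (fun x => x⁻¹ * w ∈ O)).card * O.card ≤ 2 * O.card + 250 * Z.card := by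
  set Γ := O.filter (fun x => x⁻¹ * w ∈ O) with hΓ
  have h2 := two_ne h5
  rcases Γ.eq_empty_or_nonempty with he | ⟨x0, hx0⟩
  · rw [he]; simp
  have hws : ¬ (w.1 0 1 = 0 ∧ w.1 1 0 = 0 ∧ w.1 0 0 = w.1 1 1) := by
    rintro ⟨e1, e2, e3⟩
    have hd := det4 w
    rw [e1, e2, e3] at hd
    have hsq : (w.1 1 1 - 1) * (w.1 1 1 + 1) = 0 := by linear_combination hd
    obtain ⟨n1, n2, n3, n4⟩ := one4 (p := p)
    rcases mul_eq_zero.1 hsq with h | h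
    · apply hw1
      have h' : w.1 1 1 = 1 := by linear_combination h
      apply ext4
      · rw [n1, e3, h']
      · rw [n2, e1]
      · rw [n3, e2]
      · rw [n4, h']
    · have h' : w.1 1 1 = -1 := by linear_combination h
      rw [hΓ, Finset.mem_filter] at hx0
      have t1 := hO _ hx0.1
      have t2 := hO _ hx0.2
      rw [tr_mul, (inv4 x0).1, (inv4 x0).2.1, (inv4 x0).2.2.1, (inv4 x0).2.2.2, e1, e2, e3, h'] at t2
      unfold tr at t1
      apply hτ0
      apply mul_left_cancel₀ h2
      linear_combination -t1 - t2
  set Γ' := Γ.filter (fun x => x * w ≠ w * x) with hΓ'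
  have hdrop : Γ.card ≤ Γ'.card + 2 := by
    have h : Γ'.card + (Γ.filter (fun x => ¬ (x * w ≠ w * x))).card = Γ.card := by
      rw [hΓ']
      exact Finset.card_filter_add_card_filter_not (s := Γ) (fun x => x * w ≠ w * x)
    have : (Γ.filter (fun x => ¬ (x * w ≠ w * x))).card ≤ 2 := by
      apply commute_card h5 hτ hws
      intro x hx
      rw [Finset.mem_filter, hΓ, Finset.mem_filter] at hx
      exact ⟨not_not.1 hx.2, hO _ hx.1.1⟩
    omega
  have hmain : Γ'.card * O.card ≤ 250 * Z.card := by
    set P : SLp p → Finset (SLp p × SLp p) := fun h =>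
      (Γ' ×ˢ O).filter (fun q => trip w q.1 (q.1 * (h * q.2 * h⁻¹)) ≠ 0) with hP
    have hcov : Γ' ×ˢ O ⊆ B.biUnion P := by
      rintro ⟨x, y⟩ hxy
      rw [Finset.mem_biUnion]
      have hxy' := hxy
      rw [Finset.mem_product] at hxy
      obtain ⟨m1, m2, m3, m4, hm, hm0⟩ := trip_mul w x
      have hyg : Good y := by
        have := hO y hxy.2
        exact ⟨this ▸ hτ0, this ▸ hτ⟩
      have hne : (fun h : SLp p => pair m1 m2 m3 m4 (h * y * h⁻¹)) ≠ 0 := by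
        intro h0
        exact (Finset.mem_filter.1 hxy.1).2 (hm0 (pair_nonvanish h5 hyg (fun h => congrFun h0 h)))
      obtain ⟨h, hh, hne⟩ := hB _ (pair_mem m1 m2 m3 m4 y) hne
      refine ⟨h, hh, ?_⟩
      rw [hP, Finset.mem_filter]
      refine ⟨hxy', ?_⟩
      show trip w x (x * (h * y * h⁻¹)) ≠ 0
      rw [hm]
      exact hne
    have hPc : ∀ h ∈ B, (P h).card ≤ 2 * Z.card := by
      intro h hh
      apply Finset.card_le_mul_card_image_of_maps_to (f := fun q : SLp p × SLp p => q.1 * h * q.2)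
      · rintro ⟨x, y⟩ hxy
        rw [hP, Finset.mem_filter, Finset.mem_product, hΓ', Finset.mem_filter, hΓ,
          Finset.mem_filter] at hxy
        exact hZ x hxy.1.1.1.1 y hxy.1.2 h hh
      · intro z hz
        by_contra hcon
        push Not at hcon
        obtain ⟨⟨x, x'⟩, ⟨y, y'⟩, ⟨u, u'⟩, hx, hy, hu, hxy, hxu, hyu⟩ :=
          Finset.two_lt_card_iff.1 hcon
        rw [Finset.mem_filter, hP, Finset.mem_filter, Finset.mem_product, hΓ', Finset.mem_filter,
          hΓ, Finset.mem_filter] at hx hy hu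
        obtain ⟨⟨⟨⟨⟨ax1, ax2⟩, ax3⟩, ax4⟩, ax5⟩, ax6⟩ := hx
        obtain ⟨⟨⟨⟨⟨ay1, ay2⟩, ay3⟩, ay4⟩, ay5⟩, ay6⟩ := hy
        obtain ⟨⟨⟨⟨⟨au1, au2⟩, au3⟩, au4⟩, au5⟩, au6⟩ := hu
        simp only at ax1 ax2 ax3 ax4 ax5 ax6 ay1 ay2 ay3 ay4 ay5 ay6 au1 au2 au3 au4 au5 au6
        have inj : ∀ {a a' b b' : SLp p}, a * h * a' = z → b * h * b' = z → (a, a') ≠ (b, b') →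
            a ≠ b := by
          rintro a a' b b' h1 h2 hne rfl
          apply hne
          have : a' = b' := mul_left_cancel (h1.trans h2.symm)
          rw [this]
        have trw : ∀ {a : SLp p}, a ∈ O → a⁻¹ * w ∈ O → tr (a * w) = τ * tr w - τ := by
          intro a ha haw
          have := hO _ haw
          rw [tr_inv_mul, hO _ ha] at this
          linear_combination -this
        have trv : ∀ {a a' : SLp p}, a ∈ O → a' ∈ O → a * h * a' = z →
            tr (a * (x * (h * x' * h⁻¹))) = τ * tr (x * (h * x' * h⁻¹)) - τ := by
          intro a a' ha ha' hz'
          have e : a⁻¹ * (x * (h * x' * h⁻¹)) = h * a' * h⁻¹ := by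
            have : x * (h * x' * h⁻¹) = (x * h * x') * h⁻¹ := by group
            rw [this, ax6, ← hz']
            group
          have := tr_inv_mul a (x * (h * x' * h⁻¹))
          rw [e, tr_conj, hO _ ha', hO _ ha] at this
          linear_combination this
        have := fib ax5 ((hO _ ay1).trans (hO _ ax1).symm) ((hO _ au1).trans (hO _ ax1).symm)
          ((trw ay1 ay2).trans (trw ax1 ax2).symm) ((trw au1 au2).trans (trw ax1 ax2).symm)
          ((trv ay1 ay4 ay6).trans (trv ax1 ax4 ax6).symm)
          ((trv au1 au4 au6).trans (trv ax1 ax4 ax6).symm)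
          (inj ax6 ay6 hxy).symm (inj ax6 au6 hxu).symm
        exact inj ay6 au6 hyu this
    calc Γ'.card * O.card = (Γ' ×ˢ O).card := (Finset.card_product _ _).symm
      _ ≤ (B.biUnion P).card := Finset.card_le_card hcov
      _ ≤ B.card * (2 * Z.card) := Finset.card_biUnion_le_card_mul _ _ _ hPc
      _ ≤ D0 * (2 * Z.card) := Nat.mul_le_mul_right _ hBc
      _ = 250 * Z.card := by rw [D0_eq]; ring
  nlinarith

theorem growth (h5 : 5 ≤ p) {τ : ZMod p} (hτ0 : τ ≠ 0) (hτ : τ ^ 2 ≠ 4)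
    {B O Z : Finset (SLp p)} (hO : ∀ x ∈ O, tr x = τ) (hBc : B.card ≤ D0)
    (hB : ∀ f ∈ polyV p, f ≠ 0 → ∃ b ∈ B, f b ≠ 0)
    (hZ1 : ∀ x ∈ O, ∀ y ∈ O, x * y ∈ Z)
    (hZ : ∀ x ∈ O, ∀ y ∈ O, ∀ h ∈ B, x * h * y ∈ Z) :
    O.card ^ 3 ≤ 253 * Z.card ^ 2 := by
  rcases O.eq_empty_or_nonempty with he | ⟨x0, hx0⟩
  · rw [he]; simp
  have hOZ : O.card ≤ Z.card := Finset.card_le_card_of_injOn (fun y => x0 * y)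
    (fun y hy => hZ1 x0 hx0 y hy) (fun a _ b _ h => mul_left_cancel h)
  set Q := (O ×ˢ O).filter (fun q => q.1 * q.2 ≠ 1) with hQ
  have hQc : O.card ^ 2 ≤ Q.card + O.card := by
    have h := Finset.card_filter_add_card_filter_not (s := O ×ˢ O) (fun q => q.1 * q.2 ≠ 1)
    have : ((O ×ˢ O).filter (fun q => ¬ (q.1 * q.2 ≠ 1))).card ≤ O.card := by
      apply Finset.card_le_card_of_injOn (fun q => q.1)
      · intro q hq
        have hq := Finset.mem_coe.1 hq
        rw [Finset.mem_filter, Finset.mem_product] at hq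
        exact hq.1.1
      · rintro ⟨a, b⟩ hq ⟨a', b'⟩ hq' hh
        have hq := Finset.mem_coe.1 hq
        have hq' := Finset.mem_coe.1 hq'
        rw [Finset.mem_filter, not_not] at hq hq'
        simp only at hh
        subst hh
        have := mul_left_cancel (hq.2.trans hq'.2.symm)
        simp only at this
        rw [this]
    rw [Finset.card_product] at h
    nlinarith
  have hfib : Q.card * O.card ≤ Z.card * (2 * O.card + 250 * Z.card) := by
    rw [Finset.card_eq_sum_card_fiberwise (f := fun q : SLp p × SLp p => q.1 * q.2) (t := Z)
      (s := Q) ?_, Finset.sum_mul]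
    · rw [← smul_eq_mul (Z.card)]
      apply Finset.sum_le_card_nsmul
      intro w hw
      by_cases hw1 : w = 1
      · have : (Q.filter (fun q => q.1 * q.2 = w)) = ∅ := by
          apply Finset.filter_eq_empty_iff.2
          intro q hq
          rw [hQ, Finset.mem_filter] at hq
          rw [hw1]; exact hq.2
        rw [this]; simp
      · refine le_trans (Nat.mul_le_mul_right _ ?_) (growth_fibre h5 hτ0 hτ hO hBc hB hZ hw1)
        apply Finset.card_le_card_of_injOn (fun q => q.1)
        · intro q hq
          have hq := Finset.mem_coe.1 hq
          rw [Finset.mem_filter, hQ, Finset.mem_filter, Finset.mem_product] at hq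
          apply Finset.mem_coe.2
          rw [Finset.mem_filter]
          refine ⟨hq.1.1.1, ?_⟩
          rw [← hq.2]
          simpa using hq.1.1.2
        · rintro ⟨a, b⟩ hq ⟨a', b'⟩ hq' hh
          have hq := Finset.mem_coe.1 hq
          have hq' := Finset.mem_coe.1 hq'
          rw [Finset.mem_filter] at hq hq'
          simp only at hh
          subst hh
          have := mul_left_cancel (hq.2.trans hq'.2.symm)
          simp only at this
          rw [this]
    · intro q hq
      have hq := Finset.mem_coe.1 hq
      rw [hQ, Finset.mem_filter, Finset.mem_product] at hq
      exact hZ1 _ hq.1.1 _ hq.1.2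
  have h1 : O.card ^ 3 ≤ Q.card * O.card + O.card * O.card := by
    calc O.card ^ 3 = O.card ^ 2 * O.card := by ring
      _ ≤ (Q.card + O.card) * O.card := Nat.mul_le_mul_right _ hQc
      _ = _ := by ring
  have h2 : O.card * O.card ≤ Z.card * Z.card := Nat.mul_le_mul hOZ hOZ
  have h3 : Z.card * O.card ≤ Z.card * Z.card := Nat.mul_le_mul_left _ hOZ
  nlinarith


/-! ### Pivoting -/

theorem orbit_card {X W : Finset (SLp p)} (hW : ∀ x ∈ X, ∀ y ∈ X, x⁻¹ * y ∈ W) {s : SLp p} {k : ℕ}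
    (hk : ∀ S : Finset (SLp p), S ⊆ W → (∀ x ∈ S, x * s = s * x) → S.card ≤ k) :
    X.card ≤ k * (X.image (fun x => x * s * x⁻¹)).card := by
  apply Finset.card_le_mul_card_image
  intro b hb
  obtain ⟨x, hx, rfl⟩ := Finset.mem_image.1 hb
  rw [← Finset.card_image_of_injective _ (mul_right_injective x⁻¹)]
  apply hk
  · intro g hg
    obtain ⟨y, hy, rfl⟩ := Finset.mem_image.1 hg
    exact hW x hx y (Finset.mem_filter.1 hy).1
  · intro g hg
    obtain ⟨y, hy, rfl⟩ := Finset.mem_image.1 hg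
    have h := (Finset.mem_filter.1 hy).2
    show x⁻¹ * y * s = s * (x⁻¹ * y)
    calc x⁻¹ * y * s = x⁻¹ * (y * s * y⁻¹) * y := by group
      _ = x⁻¹ * (x * s * x⁻¹) * y := by rw [h]
      _ = s * (x⁻¹ * y) := by group

theorem pow_mono_mem {A : Finset (SLp p)} (h1 : 1 ∈ A) {m n : ℕ} (h : m ≤ n) {g : SLp p}
    (hg : g ∈ A ^ m) : g ∈ A ^ n := Finset.pow_subset_pow_right h1 h hg

theorem pow_inv_mem {A : Finset (SLp p)} (hA : A⁻¹ = A) {m : ℕ} {g : SLp p}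
    (hg : g ∈ A ^ m) : g⁻¹ ∈ A ^ m := by
  have : (A ^ m)⁻¹ = A ^ m := by rw [← inv_pow, hA]
  rw [← this]
  exact Finset.inv_mem_inv hg

theorem pow_mul_mem {A : Finset (SLp p)} {m n : ℕ} {g h : SLp p}
    (hg : g ∈ A ^ m) (hh : h ∈ A ^ n) : g * h ∈ A ^ (m + n) := by
  rw [pow_add]; exact Finset.mul_mem_mul hg hh

theorem pivot (h5 : 5 ≤ p) (A : Finset (SLp p)) (h1 : 1 ∈ A) (hA : A⁻¹ = A)
    (hg : Subgroup.closure (A : Set (SLp p)) = ⊤) {t : SLp p} (ht : t ∈ A ^ D0) (htg : Good t)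
    {n : ℕ} (hn : D0 ≤ 2 * n) :
    (∀ g : SLp p, ∃ b ∈ A ^ (2 * n), Good b ∧ b * (g * t * g⁻¹) = (g * t * g⁻¹) * b) ∨
    (A ^ n).card ^ 3 ≤ 54648 * (A ^ (8 * n + 4 + D0)).card ^ 2 := by
  by_cases hP : ∀ g : SLp p, ∃ b ∈ A ^ (2 * n), Good b ∧ b * (g * t * g⁻¹) = (g * t * g⁻¹) * b
  · exact Or.inl hP
  right
  by_cases hstep : ∀ a ∈ A, ∀ g : SLp p,
      (∃ b ∈ A ^ (2 * n), Good b ∧ b * (g * t * g⁻¹) = (g * t * g⁻¹) * b) →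
      (∃ b ∈ A ^ (2 * n), Good b ∧ b * ((a * g) * t * (a * g)⁻¹) = ((a * g) * t * (a * g)⁻¹) * b)
  · exact absurd (gen_induction hA hg _ ⟨t, pow_mono_mem h1 hn ht, htg, by simp⟩ hstep) hP
  push Not at hstep
  obtain ⟨a, ha, g, ⟨b, hb, hbg, hbc⟩, hno⟩ := hstep
  set s := a * b * a⁻¹ with hs
  have hsg : Good s := (good_conj a b).2 hbg
  have ha1 : a ∈ A ^ 1 := by simpa using ha
  have hsm : s ∈ A ^ (2 * n + 2) := by
    have := pow_mul_mem (pow_mul_mem ha1 hb) (pow_inv_mem hA ha1)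
    convert this using 2
    ring
  have htc : s * ((a * g) * t * (a * g)⁻¹) = ((a * g) * t * (a * g)⁻¹) * s := by
    calc s * ((a * g) * t * (a * g)⁻¹) = a * (b * (g * t * g⁻¹)) * a⁻¹ := by rw [hs]; group
      _ = a * ((g * t * g⁻¹) * b) * a⁻¹ := by rw [hbc]
      _ = _ := by rw [hs]; group
  have hbad : ∀ S : Finset (SLp p), S ⊆ A ^ (2 * n) → (∀ x ∈ S, x * s = s * x) → S.card ≤ 6 := by
    intro S hS hc
    apply card_bad h5 hsg.2 S
    intro x hx
    refine ⟨hc x hx, fun hxg => ?_⟩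
    exact hno x (hS hx) hxg (commute_trans hsg htc.symm (hc x hx))
  set O := (A ^ n).image (fun x => x * s * x⁻¹) with hO
  have hOc : (A ^ n).card ≤ 6 * O.card := by
    apply orbit_card (W := A ^ (2 * n)) _ hbad
    intro x hx y hy
    have := pow_mul_mem (pow_inv_mem hA hx) hy
    rwa [← two_mul] at this
  have hOm : ∀ x ∈ O, x ∈ A ^ (4 * n + 2) := by
    intro x hx
    obtain ⟨y, hy, rfl⟩ := Finset.mem_image.1 hx
    have := pow_mul_mem (pow_mul_mem hy hsm) (pow_inv_mem hA hy)
    convert this using 2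
    ring
  obtain ⟨B, hB, hBc, hBv⟩ := escape A h1 hA hg
  have hgr := growth h5 hsg.1 hsg.2 (O := O) (B := B) (Z := A ^ (8 * n + 4 + D0)) (by
      intro x hx
      obtain ⟨y, hy, rfl⟩ := Finset.mem_image.1 hx
      exact tr_conj y s) hBc hBv (by
      intro x hx y hy
      exact pow_mono_mem h1 (by omega) (pow_mul_mem (hOm x hx) (hOm y hy))) (by
      intro x hx y hy h hh
      exact pow_mono_mem h1 (by omega) (pow_mul_mem (pow_mul_mem (hOm x hx) (hB hh)) (hOm y hy)))
  calc (A ^ n).card ^ 3 ≤ (6 * O.card) ^ 3 := Nat.pow_le_pow_left hOc 3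
    _ = 216 * O.card ^ 3 := by ring
    _ ≤ 216 * (253 * (A ^ (8 * n + 4 + D0)).card ^ 2) := Nat.mul_le_mul_left _ hgr
    _ = _ := by ring


/-! ### Endgame, part one -/

instance : DecidablePred (Good (p := p)) := fun g => by unfold Good; infer_instance

theorem card_lower (h5 : 5 ≤ p) : p ^ 3 ≤ 2 * Nat.card (SLp p) := by
  let f : {a : ZMod p // a ≠ 0} × ZMod p × ZMod p → SLp p := fun q =>
    ⟨!![q.1.1, q.2.1; q.2.2, (1 + q.2.1 * q.2.2) / q.1.1], by
      have := q.1.2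
      rw [Matrix.det_fin_two]
      simp
      field_simp
      ring⟩
  have hf : Function.Injective f := by
    rintro ⟨⟨a, ha⟩, b, c⟩ ⟨⟨a', ha'⟩, b', c'⟩ h
    have e : ∀ i j, (f ⟨⟨a, ha⟩, b, c⟩).1 i j = (f ⟨⟨a', ha'⟩, b', c'⟩).1 i j := by rw [h]; simp
    have e1 := e 0 0
    have e2 := e 0 1
    have e3 := e 1 0
    simp [f] at e1 e2 e3
    subst e1 e2 e3
    rfl
  have := Nat.card_le_card_of_injective f hf
  rw [Nat.card_prod, Nat.card_prod, Nat.card_zmod] at this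
  have h1 : Nat.card {a : ZMod p // a ≠ 0} = p - 1 := by
    rw [Nat.card_eq_fintype_card]
    rw [Fintype.card_subtype_compl (fun a : ZMod p => a = 0)]
    simp [ZMod.card]
  rw [h1] at this
  obtain ⟨q, rfl⟩ : ∃ q, p = q + 1 := ⟨p - 1, by omega⟩
  simp only [Nat.add_sub_cancel] at this
  nlinarith

theorem card_upper (S : Finset (SLp p)) : S.card ≤ p ^ 4 := by
  have : S.card ≤ (Finset.univ : Finset (ZMod p × ZMod p × ZMod p × ZMod p)).card := by
    apply Finset.card_le_card_of_injOn (fun g => (g.1 0 0, g.1 0 1, g.1 1 0, g.1 1 1))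
    · intro x _; simp
    · intro x _ y _ h
      simp only [Prod.mk.injEq] at h
      exact ext4 h.1 h.2.1 h.2.2.1 h.2.2.2
  refine this.trans (le_of_eq ?_)
  simp [ZMod.card]
  ring

theorem endgame1 (h5 : 5 ≤ p) (A : Finset (SLp p)) (h1 : 1 ∈ A) (hA : A⁻¹ = A)
    (hg : Subgroup.closure (A : Set (SLp p)) = ⊤) {t : SLp p} (htg : Good t)
    {n : ℕ} (hn : D0 ≤ 2 * n)
    (hpiv : ∀ g : SLp p, ∃ b ∈ A ^ (2 * n), Good b ∧ b * (g * t * g⁻¹) = (g * t * g⁻¹) * b) :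
    p ^ 12 ≤ 22748594176 * (A ^ (14 * n)).card ^ 5 := by
  have _ : Fintype (SLp p) := Fintype.ofFinite _
  let T : ℕ → SLp p → Finset (SLp p) := fun m g =>
    (A ^ m).filter (fun b => Good b ∧ b * (g * t * g⁻¹) = (g * t * g⁻¹) * b)
  have hcount : ∀ m Y : ℕ, (∀ g, Y ≤ (T m g).card) → p ^ 2 * Y ≤ 8 * (A ^ m).card := by
    intro m Y hY
    have hdc := Finset.sum_card_bipartiteAbove_eq_sum_card_bipartiteBelow
      (s := (Finset.univ : Finset (SLp p))) (t := A ^ m)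
      (fun g b => Good b ∧ b * (g * t * g⁻¹) = (g * t * g⁻¹) * b)
    have lo : Nat.card (SLp p) * Y ≤ ∑ g : SLp p, (Finset.bipartiteAbove (fun g b => Good b ∧
        b * (g * t * g⁻¹) = (g * t * g⁻¹) * b) (A ^ m) g).card := by
      rw [Nat.card_eq_fintype_card, ← smul_eq_mul, ← Finset.card_univ]
      apply Finset.card_nsmul_le_sum
      intro g _
      exact hY g
    have hi : ∑ b ∈ A ^ m, (Finset.bipartiteBelow (fun g b => Good b ∧
        b * (g * t * g⁻¹) = (g * t * g⁻¹) * b) (Finset.univ : Finset (SLp p)) b).card ≤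
        (A ^ m).card * (4 * p) := by
      rw [← smul_eq_mul (A ^ m).card]
      apply Finset.sum_le_card_nsmul
      intro b hb
      by_cases hbg : Good b
      · apply card_conj_into h5 htg hbg
        intro g hg
        exact ((Finset.mem_bipartiteBelow _).1 hg).2.2
      · have : Finset.bipartiteBelow (fun g b => Good b ∧
          b * (g * t * g⁻¹) = (g * t * g⁻¹) * b) (Finset.univ : Finset (SLp p)) b = ∅ := by
          apply Finset.filter_eq_empty_iff.2
          intro g _ h
          exact hbg h.1
        rw [this]; simp
    have h3 := card_lower h5
    have : Nat.card (SLp p) * Y ≤ (A ^ m).card * (4 * p) := lo.trans (hdc.le.trans hi)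
    have h4 : p * (p ^ 2 * Y) ≤ p * (8 * (A ^ m).card) := by
      calc p * (p ^ 2 * Y) = p ^ 3 * Y := by ring
        _ ≤ 2 * Nat.card (SLp p) * Y := Nat.mul_le_mul_right _ h3
        _ = 2 * (Nat.card (SLp p) * Y) := by ring
        _ ≤ 2 * ((A ^ m).card * (4 * p)) := Nat.mul_le_mul_left _ this
        _ = _ := by ring
    exact Nat.le_of_mul_le_mul_left h4 (by omega)
  obtain ⟨g, -, hmin⟩ := Finset.exists_min_image Finset.univ (fun g => (T (4 * n) g).card)
    ⟨1, Finset.mem_univ _⟩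
  obtain ⟨b, hb, hbg, hbc⟩ := hpiv g
  obtain ⟨Y, hY⟩ : ∃ Y, Y = (T (4 * n) g).card := ⟨_, rfl⟩
  have hY1 : 1 ≤ Y := by
    rw [hY]
    apply Finset.card_pos.2
    exact ⟨b, Finset.mem_filter.2 ⟨pow_mono_mem h1 (by omega) hb, hbg, hbc⟩⟩
  have c1 : p ^ 2 * Y ≤ 8 * (A ^ (4 * n)).card := hcount _ _ (fun g' => by
    rw [hY]; exact hmin g' (Finset.mem_univ _))
  have c2 : p ^ 2 * 1 ≤ 8 * (A ^ (2 * n)).card := hcount _ _ (fun g' => by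
    apply Finset.card_pos.2
    obtain ⟨b, hb, hbg, hbc⟩ := hpiv g'
    exact ⟨b, Finset.mem_filter.2 ⟨hb, hbg, hbc⟩⟩)
  have hcent : ∀ S : Finset (SLp p), S ⊆ A ^ (4 * n) → (∀ x ∈ S, x * b = b * x) →
      S.card ≤ 7 * Y := by
    intro S hS hc
    have hsplit := Finset.card_filter_add_card_filter_not (s := S) (fun x => Good x)
    have e1 : (S.filter (fun x => Good x)).card ≤ Y := by
      rw [hY]
      apply Finset.card_le_card
      intro x hx
      obtain ⟨hx, hxg⟩ := Finset.mem_filter.1 hx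
      exact Finset.mem_filter.2 ⟨hS hx, hxg, commute_trans hbg hbc.symm (hc x hx)⟩
    have e2 : (S.filter (fun x => ¬ Good x)).card ≤ 6 := by
      apply card_bad h5 hbg.2
      intro x hx
      obtain ⟨hx, hxg⟩ := Finset.mem_filter.1 hx
      exact ⟨hc x hx, hxg⟩
    omega
  set O := (A ^ (2 * n)).image (fun x => x * b * x⁻¹) with hO
  have hOc : (A ^ (2 * n)).card ≤ 7 * Y * O.card := by
    apply orbit_card (W := A ^ (4 * n)) _ hcent
    intro x hx y hy
    have := pow_mul_mem (pow_inv_mem hA hx) hy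
    convert this using 2
    ring
  have hOm : ∀ x ∈ O, x ∈ A ^ (6 * n) := by
    intro x hx
    obtain ⟨y, hy, rfl⟩ := Finset.mem_image.1 hx
    have := pow_mul_mem (pow_mul_mem hy hb) (pow_inv_mem hA hy)
    convert this using 2
    ring
  obtain ⟨B, hB, hBc, hBv⟩ := escape A h1 hA hg
  have hgr := growth h5 hbg.1 hbg.2 (O := O) (B := B) (Z := A ^ (14 * n)) (by
      intro x hx
      obtain ⟨y, hy, rfl⟩ := Finset.mem_image.1 hx
      exact tr_conj y b) hBc hBv (by
      intro x hx y hy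
      exact pow_mono_mem h1 (by omega) (pow_mul_mem (hOm x hx) (hOm y hy))) (by
      intro x hx y hy h hh
      exact pow_mono_mem h1 (by omega) (pow_mul_mem (pow_mul_mem (hOm x hx) (hB hh)) (hOm y hy)))
  have c3 : (A ^ (4 * n)).card ≤ (A ^ (14 * n)).card :=
    Finset.card_le_card (Finset.pow_subset_pow_right h1 (by omega))
  obtain ⟨h, hh⟩ : ∃ h, h = (A ^ (14 * n)).card := ⟨_, rfl⟩
  rw [← hh] at hgr c3 ⊢
  have d1 : p ^ 2 * Y ≤ 8 * h := by omega
  have d2 : p ^ 2 ≤ 56 * Y * O.card := by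
    calc p ^ 2 ≤ 8 * (A ^ (2 * n)).card := by omega
      _ ≤ 8 * (7 * Y * O.card) := Nat.mul_le_mul_left _ hOc
      _ = _ := by ring
  calc p ^ 12 = p ^ 6 * (p ^ 2) ^ 3 := by ring
    _ ≤ p ^ 6 * (56 * Y * O.card) ^ 3 := Nat.mul_le_mul_left _ (Nat.pow_le_pow_left d2 3)
    _ = 175616 * (p ^ 2 * Y) ^ 3 * O.card ^ 3 := by ring
    _ ≤ 175616 * (8 * h) ^ 3 * (253 * h ^ 2) :=
      Nat.mul_le_mul (Nat.mul_le_mul_left _ (Nat.pow_le_pow_left d1 3)) hgr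
    _ = 22748594176 * h ^ 5 := by ring


/-! ### Endgame, part two: sum-product in the Borel subgroup -/

theorem cs_card {α β : Type*} [DecidableEq α] [DecidableEq β] (s : Finset α) (f : α → β) :
    s.card ^ 2 ≤ (s.image f).card * ∑ q ∈ s, (s.filter (fun r => f r = f q)).card := by
  have h1 : s.card = ∑ z ∈ s.image f, (s.filter (fun r => f r = z)).card :=
    Finset.card_eq_sum_card_fiberwise (fun x hx => Finset.mem_coe.2 (Finset.mem_image_of_mem f hx))
  have h2 : ∑ q ∈ s, (s.filter (fun r => f r = f q)).card =
      ∑ z ∈ s.image f, (s.filter (fun r => f r = z)).card ^ 2 := by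
    rw [← Finset.sum_fiberwise_of_maps_to (s := s) (t := s.image f) (g := f)
      (fun x hx => Finset.mem_image_of_mem f hx)]
    apply Finset.sum_congr rfl
    intro z hz
    rw [Finset.sum_congr rfl (g := fun _ => (s.filter (fun r => f r = z)).card)]
    · rw [Finset.sum_const, smul_eq_mul, pow_two]
    · intro q hq
      rw [(Finset.mem_filter.1 hq).2]
  rw [h2]
  calc s.card ^ 2 = (∑ z ∈ s.image f, (s.filter (fun r => f r = z)).card) ^ 2 := by rw [← h1]
    _ ≤ _ := sq_sum_le_card_mul_sum_sq

/-- the set `X + ξ X` -/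
def dil (X : Finset (ZMod p)) (ξ : ZMod p) : Finset (ZMod p) :=
  (X ×ˢ X).image (fun q => q.1 + ξ * q.2)

theorem variance (X Ξ : Finset (ZMod p)) (hX : X.Nonempty) (hΞ : Ξ.Nonempty) :
    ∃ ξ ∈ Ξ, p * Ξ.card * X.card ^ 2 ≤ (dil X ξ).card * (X.card ^ 2 * Ξ.card + p ^ 2) := by
  let E : ZMod p → ℕ := fun ξ => ∑ q ∈ X ×ˢ X,
    ((X ×ˢ X).filter (fun r => r.1 + ξ * r.2 = q.1 + ξ * q.2)).card
  have hcs : ∀ ξ, X.card ^ 4 ≤ (dil X ξ).card * E ξ := by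
    intro ξ
    have := cs_card (X ×ˢ X) (fun q => q.1 + ξ * q.2)
    rw [Finset.card_product] at this
    calc X.card ^ 4 = (X.card * X.card) ^ 2 := by ring
      _ ≤ _ := this
  have hlow : ∀ ξ, X.card ^ 4 ≤ p * E ξ := by
    intro ξ
    refine (hcs ξ).trans (Nat.mul_le_mul_right _ ?_)
    have := Finset.card_le_univ (dil X ξ)
    rwa [ZMod.card] at this
  have htot : ∑ ξ : ZMod p, E ξ ≤ X.card ^ 2 * (p + X.card ^ 2) := by
    have e : ∑ ξ : ZMod p, E ξ = ∑ q ∈ X ×ˢ X, ∑ r ∈ X ×ˢ X,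
        ((Finset.univ : Finset (ZMod p)).filter (fun ξ => r.1 + ξ * r.2 = q.1 + ξ * q.2)).card := by
      simp only [E]
      rw [Finset.sum_comm]
      apply Finset.sum_congr rfl
      intro q _
      exact Finset.sum_card_bipartiteAbove_eq_sum_card_bipartiteBelow
        (s := (Finset.univ : Finset (ZMod p))) (t := X ×ˢ X)
        (fun ξ r => r.1 + ξ * r.2 = q.1 + ξ * q.2)
    rw [e]
    have hc : (X ×ˢ X).card = X.card ^ 2 := by rw [Finset.card_product]; ring
    rw [← hc, ← smul_eq_mul]
    apply Finset.sum_le_card_nsmul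
    intro q hq
    rw [← Finset.add_sum_erase _ _ hq]
    apply add_le_add
    · have := Finset.card_le_univ ((Finset.univ : Finset (ZMod p)).filter
        (fun ξ => q.1 + ξ * q.2 = q.1 + ξ * q.2))
      rwa [ZMod.card] at this
    · have : ∀ r ∈ (X ×ˢ X).erase q, ((Finset.univ : Finset (ZMod p)).filter
          (fun ξ => r.1 + ξ * r.2 = q.1 + ξ * q.2)).card ≤ 1 := by
        intro r hr
        have hne := Finset.ne_of_mem_erase hr
        apply Finset.card_le_one.2
        intro a ha b hb
        have ha := (Finset.mem_filter.1 ha).2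
        have hb := (Finset.mem_filter.1 hb).2
        by_cases h2 : r.2 - q.2 = 0
        · exfalso
          apply hne
          have h2' : r.2 = q.2 := by linear_combination h2
          rw [h2'] at ha
          exact Prod.ext (by linear_combination ha) h2'
        · apply mul_right_cancel₀ h2
          linear_combination ha - hb
      refine (Finset.sum_le_card_nsmul _ _ _ this).trans ?_
      rw [smul_eq_mul, mul_one]
      exact Finset.card_le_card (Finset.erase_subset _ _)
  have hm : 0 < X.card := Finset.card_pos.2 hX
  have hk : 0 < Ξ.card := Finset.card_pos.2 hΞ
  -- sum over `Ξ`
  have hsumΞ : ∑ ξ ∈ Ξ, p * Ξ.card * E ξ ≤ ∑ ξ ∈ Ξ, (X.card ^ 4 * Ξ.card + p ^ 2 * X.card ^ 2) := by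
    have hsplit : ∑ ξ ∈ Ξ, E ξ + ∑ ξ ∈ Ξᶜ, E ξ = ∑ ξ : ZMod p, E ξ := Finset.sum_add_sum_compl _ _
    have hcompl : Ξᶜ.card * X.card ^ 4 ≤ ∑ ξ ∈ Ξᶜ, p * E ξ := by
      rw [← smul_eq_mul]
      exact Finset.card_nsmul_le_sum _ _ _ (fun ξ _ => hlow ξ)
    have hcc : Ξ.card + Ξᶜ.card = p := by
      rw [Finset.card_add_card_compl, ZMod.card]
    rw [← Finset.mul_sum] at hcompl
    rw [← Finset.mul_sum, Finset.sum_const, smul_eq_mul]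
    have : p * ∑ ξ ∈ Ξ, E ξ + p * ∑ ξ ∈ Ξᶜ, E ξ ≤ p * (X.card ^ 2 * (p + X.card ^ 2)) := by
      rw [← mul_add, hsplit]
      exact Nat.mul_le_mul_left _ htot
    have h2 : p * (X.card ^ 2 * (p + X.card ^ 2)) = p ^ 2 * X.card ^ 2 + Ξ.card * X.card ^ 4 +
        Ξᶜ.card * X.card ^ 4 := by
      calc p * (X.card ^ 2 * (p + X.card ^ 2)) = p ^ 2 * X.card ^ 2 + p * X.card ^ 4 := by ring
        _ = p ^ 2 * X.card ^ 2 + (Ξ.card + Ξᶜ.card) * X.card ^ 4 := by rw [hcc]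
        _ = _ := by ring
    have h3 : p * ∑ ξ ∈ Ξ, E ξ ≤ p ^ 2 * X.card ^ 2 + Ξ.card * X.card ^ 4 := by omega
    calc p * Ξ.card * ∑ ξ ∈ Ξ, E ξ = Ξ.card * (p * ∑ ξ ∈ Ξ, E ξ) := by ring
      _ ≤ Ξ.card * (p ^ 2 * X.card ^ 2 + Ξ.card * X.card ^ 4) := Nat.mul_le_mul_left _ h3
      _ = _ := by ring
  obtain ⟨ξ, hξ, hle⟩ := Finset.exists_le_of_sum_le hΞ hsumΞ
  refine ⟨ξ, hξ, ?_⟩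
  have hm2 : 0 < X.card ^ 2 := by positivity
  apply Nat.le_of_mul_le_mul_left _ hm2
  calc X.card ^ 2 * (p * Ξ.card * X.card ^ 2) = p * Ξ.card * X.card ^ 4 := by ring
    _ ≤ p * Ξ.card * ((dil X ξ).card * E ξ) := Nat.mul_le_mul_left _ (hcs ξ)
    _ = (dil X ξ).card * (p * Ξ.card * E ξ) := by ring
    _ ≤ (dil X ξ).card * (X.card ^ 4 * Ξ.card + p ^ 2 * X.card ^ 2) := Nat.mul_le_mul_left _ hle
    _ = _ := by ring

theorem two_step {P h m0 k m1 m2 : ℕ} (hP : 256 ≤ P) (h0 : h ≤ P ^ 2 * m0) (hm0 : m0 ≤ P)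
    (hk : h ≤ 4 * P * k * m0) (hh : 256 * P ^ 9 ≤ h ^ 4)
    (h1 : P * k * m0 ^ 2 ≤ m1 * (m0 ^ 2 * k + P ^ 2))
    (h2 : P * k * m1 ^ 2 ≤ m2 * (m1 ^ 2 * k + P ^ 2)) : P ≤ 2 * m2 := by
  have hPp : 0 < P := by omega
  have key : P ^ 2 ≤ k * m1 ^ 2 := by
    rcases le_total (P ^ 2) (m0 ^ 2 * k) with hc | hc
    · -- `m1 ≥ P/2`
      have hpos : 0 < m0 ^ 2 * k := lt_of_lt_of_le (by positivity) hc
      have hm1 : P ≤ 2 * m1 := by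
        apply Nat.le_of_mul_le_mul_left _ hpos
        calc m0 ^ 2 * k * P = P * k * m0 ^ 2 := by ring
          _ ≤ m1 * (m0 ^ 2 * k + P ^ 2) := h1
          _ ≤ m1 * (m0 ^ 2 * k + m0 ^ 2 * k) := Nat.mul_le_mul_left _ (by omega)
          _ = _ := by ring
      have hk4 : 4 ≤ k := by
        by_contra hlt
        have hk3 : k ≤ 3 := by omega
        have : h ≤ 12 * P ^ 2 := by
          calc h ≤ 4 * P * k * m0 := hk
            _ ≤ 4 * P * 3 * P := by gcongr
            _ = _ := by ring
        have h4 : h ^ 4 ≤ (12 * P ^ 2) ^ 4 := Nat.pow_le_pow_left this 4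
        have h5 : 256 * P ^ 9 ≤ 20736 * P ^ 8 := by
          calc 256 * P ^ 9 ≤ h ^ 4 := hh
            _ ≤ _ := h4
            _ = _ := by ring
        have h6 : P ^ 8 * (256 * P) ≤ P ^ 8 * 20736 := by
          calc P ^ 8 * (256 * P) = 256 * P ^ 9 := by ring
            _ ≤ _ := h5
            _ = _ := by ring
        have := Nat.le_of_mul_le_mul_left h6 (by positivity)
        omega
      calc P ^ 2 ≤ (2 * m1) ^ 2 := Nat.pow_le_pow_left hm1 2
        _ = 4 * m1 ^ 2 := by ring
        _ ≤ k * m1 ^ 2 := Nat.mul_le_mul_right _ hk4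
    · have hm1 : k * m0 ^ 2 ≤ 2 * P * m1 := by
        apply Nat.le_of_mul_le_mul_left _ hPp
        calc P * (k * m0 ^ 2) = P * k * m0 ^ 2 := by ring
          _ ≤ m1 * (m0 ^ 2 * k + P ^ 2) := h1
          _ ≤ m1 * (P ^ 2 + P ^ 2) := Nat.mul_le_mul_left _ (by omega)
          _ = _ := by ring
      have e1 : h ^ 4 ≤ 64 * P ^ 5 * (k ^ 3 * m0 ^ 4) := by
        calc h ^ 4 = h * h ^ 3 := by ring
          _ ≤ (P ^ 2 * m0) * (4 * P * k * m0) ^ 3 := Nat.mul_le_mul h0 (Nat.pow_le_pow_left hk 3)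
          _ = _ := by ring
      have e2 : 64 * P ^ 5 * (4 * P ^ 4) ≤ 64 * P ^ 5 * (k ^ 3 * m0 ^ 4) := by
        calc 64 * P ^ 5 * (4 * P ^ 4) = 256 * P ^ 9 := by ring
          _ ≤ _ := hh.trans e1
      have e3 := Nat.le_of_mul_le_mul_left e2 (by positivity)
      have e4 : (4 * P ^ 2) * P ^ 2 ≤ (4 * P ^ 2) * (k * m1 ^ 2) := by
        calc (4 * P ^ 2) * P ^ 2 = 4 * P ^ 4 := by ring
          _ ≤ k ^ 3 * m0 ^ 4 := e3
          _ = k * (k * m0 ^ 2) ^ 2 := by ring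
          _ ≤ k * (2 * P * m1) ^ 2 := Nat.mul_le_mul_left _ (Nat.pow_le_pow_left hm1 2)
          _ = _ := by ring
      exact Nat.le_of_mul_le_mul_left e4 (by positivity)
  have hpos : 0 < k * m1 ^ 2 := lt_of_lt_of_le (by positivity) key
  apply Nat.le_of_mul_le_mul_left _ hpos
  calc k * m1 ^ 2 * P = P * k * m1 ^ 2 := by ring
    _ ≤ m2 * (m1 ^ 2 * k + P ^ 2) := h2
    _ ≤ m2 * (m1 ^ 2 * k + k * m1 ^ 2) := Nat.mul_le_mul_left _ (by omega)
    _ = _ := by ring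

theorem add_full (h5 : 5 ≤ p) (X : Finset (ZMod p)) (hX : p ≤ 2 * X.card) (z : ZMod p) :
    ∃ x ∈ X, ∃ y ∈ X, x + y = z := by
  by_contra hcon
  push Not at hcon
  have hd : Disjoint X (X.image (fun x => z - x)) := by
    rw [Finset.disjoint_left]
    intro a ha hb
    obtain ⟨b, hbX, rfl⟩ := Finset.mem_image.1 hb
    exact hcon _ ha b hbX (by ring)
  have h1 := Finset.card_union_of_disjoint hd
  rw [Finset.card_image_of_injective _ sub_right_injective] at h1
  have h2 := Finset.card_le_univ (X ∪ X.image (fun x => z - x))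
  rw [ZMod.card] at h2
  have h3 : p = 2 * X.card := by omega
  have hodd := hp.out.eq_two_or_odd
  omega


theorem pow_mul_mem_of_eq {A : Finset (SLp p)} {m n k : ℕ} (h : m + n = k) {a b : SLp p}
    (ha : a ∈ A ^ m) (hb : b ∈ A ^ n) : a * b ∈ A ^ k := h ▸ pow_mul_mem ha hb

theorem up_mul (x y : ZMod p) : up x * up y = up (x + y) := by
  obtain ⟨h1, h2, h3, h4⟩ := mul4 (up x) (up y)
  obtain ⟨a1, a2, a3, a4⟩ := up4 x
  obtain ⟨b1, b2, b3, b4⟩ := up4 y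
  obtain ⟨c1, c2, c3, c4⟩ := up4 (x + y)
  apply ext4
  · rw [h1, a1, a2, b1, b3, c1]; ring
  · rw [h2, a1, a2, b2, b4, c2]; ring
  · rw [h3, a3, a4, b1, b3, c3]; ring
  · rw [h4, a3, a4, b2, b4, c4]; ring

theorem up_conj {e : SLp p} (he : e.1 1 0 = 0) (x : ZMod p) :
    e * up x * e⁻¹ = up (e.1 0 0 ^ 2 * x) := by
  obtain ⟨h1, h2, h3, h4⟩ := conj4 e (up x)
  obtain ⟨a1, a2, a3, a4⟩ := up4 x
  obtain ⟨c1, c2, c3, c4⟩ := up4 (e.1 0 0 ^ 2 * x)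
  have hd := det4 e
  rw [he] at hd
  apply ext4
  · rw [h1, c1, a1, a2, a3, a4, he]; linear_combination hd
  · rw [h2, c2, a1, a2, a3, a4]; ring
  · rw [h3, c3, a1, a2, a3, a4, he]; ring
  · rw [h4, c4, a1, a2, a3, a4, he]; linear_combination hd

theorem eq_up {g : SLp p} (h1 : g.1 0 0 = 1) (h3 : g.1 1 0 = 0) : g = up (g.1 0 1) := by
  obtain ⟨c1, c2, c3, c4⟩ := up4 (g.1 0 1)
  have hd := det4 g
  rw [h1, h3] at hd
  apply ext4
  · rw [h1, c1]
  · rw [c2]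
  · rw [h3, c3]
  · rw [c4]; linear_combination hd

theorem inv_mul4 (x y : SLp p) :
    (x⁻¹ * y).1 0 0 = x.1 1 1 * y.1 0 0 - x.1 0 1 * y.1 1 0 ∧
    (x⁻¹ * y).1 1 0 = x.1 0 0 * y.1 1 0 - x.1 1 0 * y.1 0 0 := by
  obtain ⟨h1, h2, h3, h4⟩ := mul4 x⁻¹ y
  obtain ⟨i1, i2, i3, i4⟩ := inv4 x
  rw [h1, h3, i1, i2, i3, i4]
  constructor <;> ring

/-- unipotent part of a set -/
def upar (S : Finset (SLp p)) : Finset (ZMod p) := Finset.univ.filter (fun x => up x ∈ S)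

theorem mem_upar {S : Finset (SLp p)} {x : ZMod p} : x ∈ upar S ↔ up x ∈ S := by
  simp [upar]

/-- fibre counting: a set of elements with common first column -/
theorem card_le_upar {S W : Finset (SLp p)} (hW : ∀ x ∈ S, ∀ y ∈ S, x⁻¹ * y ∈ W)
    (hS : ∀ x ∈ S, ∀ y ∈ S, x.1 0 0 = y.1 0 0 ∧ x.1 1 0 = y.1 1 0) :
    S.card ≤ (upar W).card := by
  rcases S.eq_empty_or_nonempty with he | ⟨x, hx⟩
  · rw [he]; simp
  have key : ∀ y ∈ S, x⁻¹ * y = up ((x⁻¹ * y).1 0 1) := by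
    intro y hy
    obtain ⟨e1, e2⟩ := inv_mul4 x y
    obtain ⟨s1, s2⟩ := hS x hx y hy
    apply eq_up
    · rw [e1, ← s1, ← s2]; linear_combination det4 x
    · rw [e2, ← s1, ← s2]; ring
  apply Finset.card_le_card_of_injOn (fun y => (x⁻¹ * y).1 0 1)
  · intro y hy
    apply Finset.mem_coe.2
    rw [mem_upar, ← key y hy]
    exact hW x hx y hy
  · intro y hy z hz h
    have : x⁻¹ * y = x⁻¹ * z := by
      rw [key y hy, key z hz]
      exact congrArg up h
    exact mul_left_cancel this

theorem borel (hp256 : 256 ≤ p) (H : Finset (SLp p)) (h1 : 1 ∈ H) (hH : H⁻¹ = H)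
    (hh : 256 * p ^ 9 ≤ H.card ^ 4) (x : ZMod p) {N : ℕ} (hN : 56 ≤ N) : up x ∈ H ^ N := by
  have h5 : 5 ≤ p := by omega
  set X0 := upar (H ^ 4) with hX0
  set E := (H ^ 2).filter (fun e => e.1 1 0 = 0) with hE
  set Ξ := E.image (fun e => e.1 0 0 ^ 2) with hΞ
  have hmem1 : ∀ {g : SLp p}, g ∈ H → g ∈ H ^ 1 := by intro g hg; simpa using hg
  have h0 : H.card ≤ X0.card * (p ^ 2) := by
    have hc : (Finset.univ : Finset (ZMod p × ZMod p)).card = p ^ 2 := by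
      simp [ZMod.card]; ring
    rw [← hc]
    apply Finset.card_le_mul_card_image_of_maps_to (f := fun g : SLp p => (g.1 0 0, g.1 1 0))
    · intro g _; exact Finset.mem_univ _
    · intro b _
      apply card_le_upar
      · intro u hu v hv
        exact pow_mono_mem h1 (by norm_num) (pow_mul_mem
          (pow_inv_mem hH (hmem1 (Finset.mem_filter.1 hu).1)) (hmem1 (Finset.mem_filter.1 hv).1))
      · intro u hu v hv
        have e := (Finset.mem_filter.1 hu).2.trans (Finset.mem_filter.1 hv).2.symm
        simp only [Prod.mk.injEq] at e
        exact e
  have hE1 : H.card ≤ E.card * (2 * p) := by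
    have hc : (Finset.univ : Finset (Option (ZMod p))).card ≤ 2 * p := by
      simp [ZMod.card]; omega
    refine le_trans ?_ (Nat.mul_le_mul_left _ hc)
    apply Finset.card_le_mul_card_image_of_maps_to
      (f := fun g : SLp p => if g.1 1 0 = 0 then none else some (g.1 0 0 / g.1 1 0))
    · intro g _; exact Finset.mem_univ _
    · intro b _
      set S := H.filter (fun g : SLp p =>
        (if g.1 1 0 = 0 then none else some (g.1 0 0 / g.1 1 0)) = b) with hS
      rcases S.eq_empty_or_nonempty with he | ⟨u, hu⟩
      · rw [he]; simp
      apply Finset.card_le_card_of_injOn (fun y => u⁻¹ * y)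
      · intro y hy
        have hy := Finset.mem_coe.1 hy
        rw [hS, Finset.mem_filter] at hu hy
        apply Finset.mem_coe.2
        rw [hE, Finset.mem_filter]
        refine ⟨pow_mul_mem (pow_inv_mem hH (hmem1 hu.1)) (hmem1 hy.1), ?_⟩
        rw [(inv_mul4 u y).2]
        have e := hu.2.trans hy.2.symm
        by_cases c1 : u.1 1 0 = 0
        · by_cases c2 : y.1 1 0 = 0
          · rw [c1, c2]; ring
          · simp [c1, c2] at e
        · by_cases c2 : y.1 1 0 = 0
          · simp [c1, c2] at e
          · simp only [c1, c2, if_false, Option.some.injEq] at e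
            field_simp at e
            linear_combination e
      · intro y _ z _ h
        exact mul_left_cancel h
  have hE2 : E.card ≤ (2 * X0.card) * Ξ.card := by
    apply Finset.card_le_mul_card_image
    intro b hb
    obtain ⟨e, he, rfl⟩ := Finset.mem_image.1 hb
    have hsub : E.filter (fun y => y.1 0 0 ^ 2 = e.1 0 0 ^ 2) ⊆
        E.filter (fun y => y.1 0 0 = e.1 0 0) ∪ E.filter (fun y => y.1 0 0 = - e.1 0 0) := by
      intro y hy
      obtain ⟨hy1, hy2⟩ := Finset.mem_filter.1 hy
      rw [Finset.mem_union]
      rcases sq_eq_sq_iff_eq_or_eq_neg.1 hy2 with h | h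
      · exact Or.inl (Finset.mem_filter.2 ⟨hy1, h⟩)
      · exact Or.inr (Finset.mem_filter.2 ⟨hy1, h⟩)
    have hone : ∀ c : ZMod p, (E.filter (fun y => y.1 0 0 = c)).card ≤ X0.card := by
      intro c
      apply card_le_upar
      · intro u hu v hv
        obtain ⟨hu1, -⟩ := Finset.mem_filter.1 hu
        obtain ⟨hv1, -⟩ := Finset.mem_filter.1 hv
        exact pow_mul_mem (pow_inv_mem hH (Finset.mem_filter.1 hu1).1) (Finset.mem_filter.1 hv1).1
      · intro u hu v hv
        obtain ⟨hu1, hu2⟩ := Finset.mem_filter.1 hu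
        obtain ⟨hv1, hv2⟩ := Finset.mem_filter.1 hv
        exact ⟨hu2.trans hv2.symm,
          (Finset.mem_filter.1 hu1).2.trans (Finset.mem_filter.1 hv1).2.symm⟩
    refine (Finset.card_le_card hsub).trans ((Finset.card_union_le _ _).trans ?_)
    have := hone (e.1 0 0)
    have := hone (-e.1 0 0)
    omega
  have hdil : ∀ (m : ℕ) (X : Finset (ZMod p)) (ξ : ZMod p), ξ ∈ Ξ → (∀ x ∈ X, up x ∈ H ^ m) →
      ∀ z ∈ dil X ξ, up z ∈ H ^ (m + (2 + m + 2)) := by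
    intro m X ξ hξ hX z hz
    obtain ⟨⟨a, b⟩, hab, rfl⟩ := Finset.mem_image.1 hz
    rw [Finset.mem_product] at hab
    obtain ⟨e, he, rfl⟩ := Finset.mem_image.1 hξ
    obtain ⟨he1, he2⟩ := Finset.mem_filter.1 he
    simp only
    rw [← up_mul, ← up_conj he2]
    exact pow_mul_mem (hX _ hab.1) (pow_mul_mem (pow_mul_mem he1 (hX _ hab.2)) (pow_inv_mem hH he1))
  have hone : up (0 : ZMod p) = 1 := by
    obtain ⟨a1, a2, a3, a4⟩ := up4 (0 : ZMod p)
    obtain ⟨b1, b2, b3, b4⟩ := one4 (p := p)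
    exact ext4 (a1.trans b1.symm) (a2.trans b2.symm) (a3.trans b3.symm) (a4.trans b4.symm)
  have hΞn : Ξ.Nonempty := by
    refine ⟨_, Finset.mem_image_of_mem _ (Finset.mem_filter.2
      ⟨pow_mono_mem h1 (by norm_num) (hmem1 h1), one4.2.2.1⟩)⟩
  have hX0n : X0.Nonempty := ⟨0, by
    rw [hX0, mem_upar, hone]; exact pow_mono_mem h1 (by norm_num) (hmem1 h1)⟩
  obtain ⟨a, ha, m0⟩ : ∃ a, a = 4 ∧ ∀ x ∈ X0, up x ∈ H ^ a := ⟨4, rfl, fun x hx => mem_upar.1 hx⟩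
  clear_value Ξ E X0
  obtain ⟨ξ, hξ, v1⟩ := variance X0 Ξ hX0n hΞn
  have hX1n : (dil X0 ξ).Nonempty := by
    obtain ⟨a, ha⟩ := hX0n
    exact ⟨_, Finset.mem_image_of_mem _ (Finset.mem_product.2 ⟨ha, ha⟩ : (a, a) ∈ X0 ×ˢ X0)⟩
  obtain ⟨ξ', hξ', v2⟩ := variance (dil X0 ξ) Ξ hX1n hΞn
  have hX0p : X0.card ≤ p := by
    have := Finset.card_le_univ X0
    rwa [ZMod.card] at this
  have hfin := two_step hp256 (by rw [mul_comm]; exact h0) hX0p (by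
    calc H.card ≤ E.card * (2 * p) := hE1
      _ ≤ (2 * X0.card) * Ξ.card * (2 * p) := Nat.mul_le_mul_right _ hE2
      _ = 4 * p * Ξ.card * X0.card := by ring) hh v1 v2
  obtain ⟨y, hy, z, hz, rfl⟩ := add_full h5 _ hfin x
  have m1 := hdil a X0 ξ hξ m0
  have m2 := hdil _ _ ξ' hξ' m1
  rw [← up_mul]
  exact pow_mono_mem h1 (by omega) (pow_mul_mem (m2 y hy) (m2 z hz))

theorem endgame2 (hp256 : 256 ≤ p) (H : Finset (SLp p)) (h1 : 1 ∈ H) (hH : H⁻¹ = H)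
    (hh : 256 * p ^ 9 ≤ H.card ^ 4) {g : SLp p} (hg : g ∈ H) (hg0 : g.1 1 0 ≠ 0) (m : SLp p)
    {N : ℕ} (hN : 227 ≤ N) : m ∈ H ^ N := by
  obtain ⟨a, ha⟩ : ∃ a, a = 56 := ⟨_, rfl⟩
  have hU : ∀ x, up x ∈ H ^ a := fun x => SLp.borel hp256 H h1 hH hh x ha.ge
  have hg1 : g ∈ H ^ 1 := by simpa using hg
  have key : ∀ k : SLp p, k.1 1 0 = g.1 1 0 → k ∈ H ^ (a + 1 + a) := by
    intro k hk
    have e : k = up ((k.1 0 0 - g.1 0 0) / g.1 1 0) * g * up ((k.1 1 1 - g.1 1 1) / g.1 1 0) := by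
      set x := (k.1 0 0 - g.1 0 0) / g.1 1 0 with hx
      set y := (k.1 1 1 - g.1 1 1) / g.1 1 0 with hy
      have hx' : x * g.1 1 0 = k.1 0 0 - g.1 0 0 := by rw [hx]; field_simp
      have hy' : y * g.1 1 0 = k.1 1 1 - g.1 1 1 := by rw [hy]; field_simp
      obtain ⟨h1, h2, h3, h4⟩ := mul4 (up x * g) (up y)
      obtain ⟨k1, k2, k3, k4⟩ := mul4 (up x) g
      obtain ⟨a1, a2, a3, a4⟩ := up4 x
      obtain ⟨b1, b2, b3, b4⟩ := up4 y
      have hdk := det4 k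
      have hdg := det4 g
      apply ext4
      · rw [h1, k1, k2, a1, a2, b1, b3]; linear_combination -hx'
      · rw [h2, k1, k2, a1, a2, b2, b4]
        apply mul_left_cancel₀ hg0
        rw [hk] at hdk
        linear_combination -hdk + hdg - (g.1 1 1 + y * g.1 1 0) * hx' - k.1 0 0 * hy'
      · rw [h3, k3, k4, a3, a4, b1, b3, hk]; ring
      · rw [h4, k3, k4, a3, a4, b2, b4]; linear_combination -hy'
    rw [e]
    exact pow_mul_mem (pow_mul_mem (hU _) hg1) (hU _)
  have key2 : ∀ k : SLp p, k.1 1 0 ≠ 0 → k ∈ H ^ ((a + 1 + a) + (a + 1 + a)) := by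
    intro k hk
    set c := g.1 1 0 with hc
    let m1 : SLp p := ⟨!![(c + c * k.1 0 0) / k.1 1 0, -1 / c; c, 0], by
      rw [Matrix.det_fin_two]; simp; field_simp⟩
    have q1 : m1 ∈ H ^ (a + 1 + a) := key m1 (by simp [m1, hc])
    have q2 : m1⁻¹ * k ∈ H ^ (a + 1 + a) := by
      apply key
      rw [(inv_mul4 m1 k).2]
      simp [m1]
      field_simp
      ring
    have := pow_mul_mem q1 q2
    rwa [mul_inv_cancel_left] at this
  by_cases hm : m.1 1 0 = 0
  · have : (m * g).1 1 0 ≠ 0 := by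
      rw [(mul4 m g).2.2.1, hm]
      have hd := det4 m
      rw [hm] at hd
      intro h
      have : m.1 1 1 = 0 := by
        apply mul_right_cancel₀ hg0
        linear_combination h
      rw [this] at hd
      simp at hd
    have := pow_mul_mem (key2 _ this) (pow_inv_mem hH hg1)
    rw [mul_inv_cancel_right] at this
    exact pow_mono_mem h1 (by omega) this
  · exact pow_mono_mem h1 (by omega) (key2 m hm)


/-! ### Assembly -/

theorem full (hp18 : 10 ^ 18 ≤ p) (A : Finset (SLp p)) (h1 : 1 ∈ A) (hA : A⁻¹ = A)
    (hg : Subgroup.closure (A : Set (SLp p)) = ⊤) {t : SLp p} (htg : Good t)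
    {n : ℕ} (hn : D0 ≤ 2 * n)
    (hpiv : ∀ g : SLp p, ∃ b ∈ A ^ (2 * n), Good b ∧ b * (g * t * g⁻¹) = (g * t * g⁻¹) * b)
    (m : SLp p) : m ∈ A ^ (3178 * n) := by
  have h5 : 5 ≤ p := by omega
  have hbig := endgame1 h5 A h1 hA hg htg hn hpiv
  have hD := D0_eq
  have hcard : 256 * p ^ 9 ≤ (A ^ (14 * n)).card ^ 4 := by
    obtain ⟨h, hh⟩ : ∃ h, h = (A ^ (14 * n)).card := ⟨_, rfl⟩
    rw [← hh] at hbig ⊢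
    by_contra hlt
    push Not at hlt
    have e1 : p ^ 45 * p ^ 3 ≤ p ^ 45 * (22748594176 ^ 4 * 256 ^ 5) := by
      calc p ^ 45 * p ^ 3 = (p ^ 12) ^ 4 := by ring
        _ ≤ (22748594176 * h ^ 5) ^ 4 := Nat.pow_le_pow_left hbig 4
        _ = 22748594176 ^ 4 * (h ^ 4) ^ 5 := by ring
        _ ≤ 22748594176 ^ 4 * (256 * p ^ 9) ^ 5 :=
          Nat.mul_le_mul_left _ (Nat.pow_le_pow_left hlt.le 5)
        _ = _ := by ring
    have e2 := Nat.le_of_mul_le_mul_left e1 (Nat.pow_pos (by omega))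
    have e3 : (10 ^ 18) ^ 3 ≤ p ^ 3 := Nat.pow_le_pow_left hp18 3
    have e4 := e3.trans e2
    norm_num at e4
  obtain ⟨g, hgA, hg0⟩ : ∃ g ∈ A, g.1 1 0 ≠ 0 := by
    by_contra hcon
    push Not at hcon
    have := gen_induction hA hg (fun g => g.1 1 0 = 0) one4.2.2.1 (by
      intro a ha g hg
      show (a * g).1 1 0 = 0
      have hg' : g.1 1 0 = 0 := hg
      rw [(mul4 a g).2.2.1, hcon a ha, hg']
      ring) (lo 1)
    have h' : (lo (1 : ZMod p)).1 1 0 = 0 := this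
    rw [(lo4 1).2.2.1] at h'
    exact one_ne_zero h'
  have hgn : g ∈ A ^ (14 * n) := pow_mono_mem h1 (m := 1) (by omega) (by simpa using hgA)
  have h1n : (1 : SLp p) ∈ A ^ (14 * n) := pow_mono_mem h1 (m := 1) (by omega) (by simpa using h1)
  obtain ⟨N, hN⟩ : ∃ N : ℕ, N = 227 := ⟨_, rfl⟩
  have := endgame2 (by omega) (A ^ (14 * n)) h1n (by rw [← inv_pow, hA]) hcard hgn hg0 m hN.ge
  rw [← pow_mul, hN] at this
  exact pow_mono_mem h1 (by omega) this

/-- exponents -/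
def nseq : ℕ → ℕ
  | 0 => 125
  | k + 1 => 8 * nseq k + 4 + 125

theorem nseq_lower (k : ℕ) : 125 ≤ nseq k := by
  induction k with
  | zero => simp [nseq]
  | succ k ih => simp only [nseq]; omega

theorem nseq_upper (k : ℕ) : nseq k + 19 ≤ 144 * 8 ^ k := by
  induction k with
  | zero => simp [nseq]
  | succ k ih => simp only [nseq]; rw [pow_succ]; omega

theorem mem_insert_pow (A : Finset (SLp p)) (m : ℕ) (g : SLp p) (hg : g ∈ (insert 1 A) ^ m) :
    ∃ j ≤ m, g ∈ A ^ j := by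
  induction m generalizing g with
  | zero => exact ⟨0, le_rfl, by simpa using hg⟩
  | succ m ih =>
    rw [pow_succ] at hg
    obtain ⟨a, ha, b, hb, rfl⟩ := Finset.mem_mul.1 hg
    obtain ⟨j, hj, haj⟩ := ih a ha
    rcases Finset.mem_insert.1 hb with rfl | hb
    · exact ⟨j, by omega, by simpa using haj⟩
    · exact ⟨j + 1, by omega, by rw [pow_succ]; exact Finset.mul_mem_mul haj hb⟩

/-- the constant -/
noncomputable def CC : ℝ := 10 ^ 81

theorem log_step {S S' : ℕ} (hS : 0 < S) (hS' : 0 < S') (h : S ^ 3 ≤ 54648 * S' ^ 2) :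
    3 / 2 * (Real.log S - Real.log CC) ≤ Real.log S' - Real.log CC := by
  have hSr : (0 : ℝ) < S := by exact_mod_cast hS
  have hSr' : (0 : ℝ) < S' := by exact_mod_cast hS'
  have h1 : (S : ℝ) ^ 3 ≤ CC * (S' : ℝ) ^ 2 := by
    have : (S : ℝ) ^ 3 ≤ 54648 * (S' : ℝ) ^ 2 := by exact_mod_cast h
    refine this.trans ?_
    have : (54648 : ℝ) ≤ CC := by unfold CC; norm_num
    gcongr
  have hC : (0 : ℝ) < CC := by unfold CC; positivity
  have h2 := Real.log_le_log (by positivity) h1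
  rw [Real.log_mul hC.ne' (by positivity), Real.log_pow, Real.log_pow] at h2
  push_cast at h2
  linarith

theorem main_large (hp18 : 10 ^ 18 ≤ p) (A : Finset (SLp p)) (hA : A⁻¹ = A)
    (hg : Subgroup.closure (A : Set (SLp p)) = ⊤) (hN : CC < (A.card : ℝ)) (g : SLp p) :
    ∃ n : ℕ, g ∈ A ^ n ∧ (n : ℝ) ≤ CC * (Real.log (Nat.card (SLp p)) /
      Real.log ((A.card : ℝ) / CC)) ^ (Real.log 8 / Real.log (3 / 2)) := by
  have h5 : 5 ≤ p := by omega
  have hC : (0 : ℝ) < CC := by unfold CC; positivity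
  have hC1 : (1 : ℝ) ≤ CC := by unfold CC; norm_num
  set A' : Finset (SLp p) := insert 1 A with hA'
  have h1 : (1 : SLp p) ∈ A' := Finset.mem_insert_self _ _
  have hAA' : A ⊆ A' := Finset.subset_insert _ _
  have hinv : A'⁻¹ = A' := by
    rw [hA', Finset.inv_insert, inv_one, hA]
  have hgen : Subgroup.closure (A' : Set (SLp p)) = ⊤ := by
    rw [eq_top_iff, ← hg]
    exact Subgroup.closure_mono (by exact_mod_cast hAA')
  have hN0 : (0 : ℝ) < A.card := hC.trans hN
  obtain ⟨t, ht, htg⟩ := exists_good h5 A' h1 hinv hgen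
  set L := Real.log ((A.card : ℝ) / CC) with hL
  have hLpos : 0 < L := Real.log_pos (by rw [one_lt_div hC]; exact hN)
  have hLeq : L = Real.log A.card - Real.log CC := Real.log_div hN0.ne' hC.ne'
  let Piv : ℕ → Prop := fun k => ∀ g : SLp p, ∃ b ∈ A' ^ (2 * nseq k), Good b ∧
    b * (g * t * g⁻¹) = (g * t * g⁻¹) * b
  have hpos : ∀ m, 0 < (A' ^ m).card := fun m =>
    Finset.card_pos.2 ⟨1, pow_mono_mem h1 (Nat.zero_le m) (by simp)⟩
  have hgrow : ∀ k, (∀ i < k, ¬ Piv i) →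
      (3 / 2 : ℝ) ^ k * L ≤ Real.log (A' ^ nseq k).card - Real.log CC := by
    intro k
    induction k with
    | zero =>
      intro _
      rw [pow_zero, one_mul, hLeq]
      apply sub_le_sub_right
      apply Real.log_le_log hN0
      have hlow := nseq_lower 0
      generalize nseq 0 = m at hlow
      have : A ⊆ A' ^ m := by
        intro x hx
        exact pow_mono_mem h1 (m := 1) (by omega) (by simpa using hAA' hx)
      exact_mod_cast Finset.card_le_card this
    | succ k ih =>
      intro hk
      have h0 := ih (fun i hi => hk i (by omega))
      have hk' := (pivot h5 A' h1 hinv hgen ht htg (n := nseq k)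
        (by rw [D0_eq]; have := nseq_lower k; omega)).resolve_left (hk k (by omega))
      have he : 8 * nseq k + 4 + D0 = nseq (k + 1) := by rw [D0_eq]; simp only [nseq]
      rw [he] at hk'
      have := log_step (hpos _) (hpos _) hk'
      calc (3 / 2 : ℝ) ^ (k + 1) * L = 3 / 2 * ((3 / 2 : ℝ) ^ k * L) := by ring
        _ ≤ 3 / 2 * (Real.log (A' ^ nseq k).card - Real.log CC) := by linarith
        _ ≤ _ := this
  have hcardle : ∀ k, Real.log (A' ^ nseq k).card - Real.log CC ≤ Real.log (Nat.card (SLp p)) := by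
    intro k
    have e1 : (A' ^ nseq k).card ≤ Nat.card (SLp p) := by
      have _ : Fintype (SLp p) := Fintype.ofFinite _
      rw [Nat.card_eq_fintype_card]
      exact Finset.card_le_univ _
    have e2 : Real.log (A' ^ nseq k).card ≤ Real.log (Nat.card (SLp p)) :=
      Real.log_le_log (by exact_mod_cast hpos _) (by exact_mod_cast e1)
    have e3 : 0 ≤ Real.log CC := Real.log_nonneg hC1
    linarith
  have hex : ∃ k, Piv k := by
    by_contra hcon
    push Not at hcon
    obtain ⟨k, hk⟩ := pow_unbounded_of_one_lt (Real.log (Nat.card (SLp p)) / L)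
      (by norm_num : (1 : ℝ) < 3 / 2)
    rw [div_lt_iff₀ hLpos] at hk
    have := (hgrow k (fun i _ => hcon i)).trans (hcardle k)
    linarith
  classical
  obtain ⟨k, hk, hkmin⟩ : ∃ k, Piv k ∧ ∀ i < k, ¬ Piv i :=
    ⟨Nat.find hex, Nat.find_spec hex, fun i hi => Nat.find_min hex hi⟩
  have hR : (3 / 2 : ℝ) ^ k ≤ Real.log (Nat.card (SLp p)) / L := by
    rw [le_div_iff₀ hLpos]
    exact (hgrow k hkmin).trans (hcardle k)
  have hmem := full hp18 A' h1 hinv hgen htg (n := nseq k)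
    (by rw [D0_eq]; have := nseq_lower k; omega) hk g
  obtain ⟨j, hj, hgj⟩ := mem_insert_pow A _ g hmem
  refine ⟨j, hgj, ?_⟩
  have h32 : 0 < Real.log (3 / 2) := Real.log_pos (by norm_num)
  have hd0 : 0 ≤ Real.log 8 / Real.log (3 / 2) :=
    div_nonneg (Real.log_nonneg (by norm_num)) h32.le
  have h8 : ((3 / 2 : ℝ)) ^ (Real.log 8 / Real.log (3 / 2)) = 8 := by
    rw [Real.rpow_def_of_pos (by norm_num), mul_div_cancel₀ _ h32.ne', Real.exp_log (by norm_num)]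
  have h8k : (8 : ℝ) ^ k ≤ (Real.log (Nat.card (SLp p)) / L) ^ (Real.log 8 / Real.log (3 / 2)) := by
    calc (8 : ℝ) ^ k = ((3 / 2 : ℝ) ^ (Real.log 8 / Real.log (3 / 2))) ^ k := by rw [h8]
      _ = ((3 / 2 : ℝ) ^ k) ^ (Real.log 8 / Real.log (3 / 2)) := by
        rw [← Real.rpow_natCast, ← Real.rpow_natCast, ← Real.rpow_mul (by norm_num),
          ← Real.rpow_mul (by norm_num), mul_comm]
      _ ≤ _ := Real.rpow_le_rpow (by positivity) hR hd0
  have hn := nseq_upper k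
  have hj2 : j ≤ 457632 * 8 ^ k := by omega
  calc (j : ℝ) ≤ 457632 * 8 ^ k := by exact_mod_cast hj2
    _ ≤ CC * 8 ^ k := by
      have : (457632 : ℝ) ≤ CC := by unfold CC; norm_num
      gcongr
    _ ≤ _ := by gcongr

end SLp


/-- **Corollary 1.3** (diameter of the Cayley graph of SL₂(F_p)): there is an absolute
constant `C > 1` such that for every prime `p` and every finite symmetric generating set
`A` of `G = SL₂(F_p)` with `N = |A| > C`, every element of `G` is a product of at most
`C·(log|G| / log(N/C))^d` elements of `A`, where `d = log 8 / log(3/2)`. -/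
theorem SL2_Cayley_diameter :
    ∃ C : ℝ, 1 < C ∧
      ∀ (p : ℕ), p.Prime →
        ∀ A : Finset (Matrix.SpecialLinearGroup (Fin 2) (ZMod p)),
          A⁻¹ = A →
          Subgroup.closure (A : Set (Matrix.SpecialLinearGroup (Fin 2) (ZMod p))) = ⊤ →
          C < (A.card : ℝ) →
          ∀ g : Matrix.SpecialLinearGroup (Fin 2) (ZMod p),
            ∃ n : ℕ, g ∈ A ^ n ∧
              (n : ℝ) ≤ C *
                (Real.log (Nat.card (Matrix.SpecialLinearGroup (Fin 2) (ZMod p))) /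
                    Real.log ((A.card : ℝ) / C)) ^ (Real.log 8 / Real.log (3 / 2)) := by
  refine ⟨SLp.CC, by unfold SLp.CC; norm_num, ?_⟩
  intro p hp A hA hg hN g
  haveI : Fact p.Prime := ⟨hp⟩
  by_cases h18 : 10 ^ 18 ≤ p
  · exact SLp.main_large h18 A hA hg hN g
  · exfalso
    have h1 : A.card ≤ p ^ 4 := SLp.card_upper A
    have h2 : p ^ 4 ≤ (10 ^ 18) ^ 4 := Nat.pow_le_pow_left (by omega) 4
    have h3 : (A.card : ℝ) ≤ ((10 ^ 18) ^ 4 : ℕ) := by exact_mod_cast h1.trans h2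
    have h4 : (((10 ^ 18) ^ 4 : ℕ) : ℝ) ≤ SLp.CC := by unfold SLp.CC; norm_num
    linarith
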